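/- Charged tracking collections converge to a charged delta distribution (flat-space version of the Lorentz-force theorem): let F : ℝ⁴ → Matrix (Fin 4) (Fin 4) ℝ be a smooth field with antisymmetric values, let γ : ℝ → ℝ⁴ be smooth with η(γ'(t), γ'(t)) = 1 and γ'(t) future timelike for all t, and let κ ≥ 0. Let 𝒞 be a collection of pairs (T, J) of smooth fields T : ℝ⁴ → Matrix (Fin 4) (Fin 4) ℝ (symmetric values, satisfying the dominant energy condition at every point) and J : ℝ⁴ → ℝ⁴ such that: Σₐ ∂J a/∂p a (p) = 0 for all p; for all p and a, Σ_b ∂T a b/∂p b (p) = Σ_b (E * F(p)) a b * J(p) b; and the charge-to-mass ratio is bounded by κ, i.e., for every p and every unit timelike t ∈ ℝ⁴, |Σₐ J(p) a * t a| ≤ κ * Σₐ Σ_b T(p) a b * t a * t b. If the collection {T : (T,J) ∈ 𝒞} tracks γ, then there exist a real κ' with |κ'| ≤ κ, reals cₙ > 0, and pairs (Tₙ, Jₙ) ∈ 𝒞 such that: for every smooth compactly supported symmetric-matrix-valued x, cₙ * ∫_{ℝ⁴} ⟨Tₙ(p), x(p)⟩ dp → ∫_ℝ Σᵢⱼ γ'(t)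 i * γ'(t) j * x(γ(t)) i j dt, and for every smooth compactly supported α : ℝ⁴ → ℝ⁴, cₙ * ∫_{ℝ⁴} Σₐ Jₙ(p) a * α(p) a dp → κ' * ∫_ℝ Σₐ γ'(t) a * α(γ(t)) a dt. -/

import Mathlib

open Matrix MeasureTheory Filter Topology

noncomputable section

abbrev Vec4 : Type := Fin 4 → ℝ
abbrev Mat4 : Type := Matrix (Fin 4) (Fin 4) ℝ

/-- The Minkowski inner product on ℝ⁴. -/
def mink (x y : Vec4) : ℝ := x 0 * y 0 - x 1 * y 1 - x 2 * y 2 - x 3 * y 3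

/-- The matrix diag(1,-1,-1,-1). -/
def E : Mat4 := Matrix.diagonal ![1, -1, -1, -1]

def FutureCausal (x : Vec4) : Prop := 0 ≤ mink x x ∧ 0 ≤ x 0
def FutureTimelike (x : Vec4) : Prop := 0 < mink x x ∧ 0 < x 0
def FutureNull (x : Vec4) : Prop := x ≠ 0 ∧ mink x x = 0 ∧ 0 < x 0
def UnitTimelike (x : Vec4) : Prop := FutureTimelike x ∧ mink x x = 1

/-- The dominant energy condition for a matrix. -/
def DEC (T : Mat4) : Prop :=
  ∀ ξ ζ : Vec4, FutureCausal ξ → FutureCausal ζ → 0 ≤ ∑ i, ∑ j, ξ i * T i j * ζ j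

/-- ⟨T, x⟩ = Σᵢⱼ T i j * x i j. -/
def minner (T x : Mat4) : ℝ := ∑ i, ∑ j, T i j * x i j

/-- The cone D of finite sums of symmetrized products of future causal vectors. -/
def coneD : Set Mat4 :=
  { x | ∃ (n : ℕ) (ξ ζ : Fin n → Vec4),
      (∀ k, FutureCausal (ξ k)) ∧ (∀ k, FutureCausal (ζ k)) ∧
      x = ∑ k, (1/2 : ℝ) • (vecMulVec (ξ k) (ζ k) + vecMulVec (ζ k) (ξ k)) }

/-- A symmetric matrix is generic if it lies in the interior of D, taken within
the space of symmetric matrices. -/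
def Generic (x : Mat4) : Prop :=
  ∃ h : xᵀ = x, (⟨x, h⟩ : { A : Mat4 // Aᵀ = A }) ∈
    interior { A : { A : Mat4 // Aᵀ = A } | A.val ∈ coneD }

/-- Partial derivative in the a-th coordinate direction. -/
def pd (a : Fin 4) (f : Vec4 → ℝ) (p : Vec4) : ℝ := fderiv ℝ f p (Pi.single a 1)

def SmoothMatField (T : Vec4 → Mat4) : Prop := ∀ a b, ContDiff ℝ (⊤ : ℕ∞) fun p => T p a b
def SymValued (T : Vec4 → Mat4) : Prop := ∀ p, (T p)ᵀ = T p
def DivFree (T : Vec4 → Mat4) : Prop := ∀ p b, ∑ a, pd a (fun q => T q a b) p = 0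

/-- A collection of fields tracks a curve. -/
def Tracks (C : Set (Vec4 → Mat4)) (γ : ℝ → Vec4) : Prop :=
  ∀ x : Vec4 → Mat4, SmoothMatField x → HasCompactSupport x → SymValued x →
    (∃ O : Set Vec4, IsOpen O ∧ Set.range γ ⊆ O ∧ ∀ p ∈ O, x p ∈ coneD) →
    (∃ t₀ : ℝ, Generic (x (γ t₀))) →
    ∃ T ∈ C, 0 < ∫ p, minner (T p) (x p)

/-- Maxwell stress-energy tensor of a field strength matrix. -/
def maxwellT (F : Mat4) : Mat4 :=
  F * E * F - ((1/4 : ℝ) * (E * F * E * F).trace) • E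

/-- Source-free Maxwell equations. -/
def SolvesMaxwell (F : Vec4 → Mat4) : Prop :=
  (∀ p b, ∑ a, E a a * pd a (fun q => F q a b) p = 0) ∧
  (∀ p a b c, pd a (fun q => F q b c) p + pd b (fun q => F q c a) p
      + pd c (fun q => F q a b) p = 0)

/-- Klein–Gordon stress-energy tensor. -/
def kgT (φ : Vec4 → ℝ) (m : ℝ) (p : Vec4) : Mat4 :=
  Matrix.of fun a b =>
    pd a φ p * pd b φ p
      - (1/2 : ℝ) * E a b * ((∑ c, E c c * (pd c φ p)^2) - m^2 * (φ p)^2)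

/-- Mass-m Klein–Gordon equation. -/
def SolvesKG (φ : Vec4 → ℝ) (m : ℝ) : Prop :=
  ∀ p, pd 0 (pd 0 φ) p - pd 1 (pd 1 φ) p - pd 2 (pd 2 φ) p - pd 3 (pd 3 φ) p
    + m^2 * φ p = 0

/-!
The dominant energy condition and the bound on the charge-to-mass ratio make the energy density
`T 0 0` dominate every component of `T` and `J`. Reparametrize `γ` by coordinate time as `Γ`.
Tracking, applied to `(f - n χₙ) e₀ e₀ᵀ` for a fixed bump `f` on the curve and cutoffs `χₙ`
exhausting its complement, yields elements of `𝒞` which, after normalization, carry asymptotically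
no energy in compact sets off the curve. Their energy is locally bounded, because the energy
balance with a multiplier decreasing faster than the Lorentz force can pump in energy propagates
the normalization at time zero to all times.

Testing a conservation law for a dominated current `K` with the product of a test function and the
displacement from `Γ` shows that asymptotically `K i` is `Γ' i` times `K 0`; hence the conservation
law says that `K 0` annihilates derivatives along the curve and is asymptotically a constant
multiple of `dt`. This applies to the rows of `T`, giving `T i j ≈ Γ' i Γ' j T 0 0`, to the charge
current `J`, and to the mass current, the contraction of `T` with the velocity, in which the Lorentz
force drops out by antisymmetry of `F`. The mass is normalized and the charges are bounded, so a
subsequence converges; the charge-to-mass ratio of the limit is bounded by testing against the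
velocity of the curve.
-/

/-! ### Test functions -/

/-- A test function: a smooth real-valued function of compact support. -/
structure IsTestFunction {V : Type*} [NormedAddCommGroup V] [NormedSpace ℝ V] (f : V → ℝ) :
    Prop where
  contDiff : ContDiff ℝ (⊤ : ℕ∞) f
  hasCompactSupport : HasCompactSupport f

namespace IsTestFunction

section NormedSpace

variable {V : Type*} [NormedAddCommGroup V] [NormedSpace ℝ V] {f g : V → ℝ}

protected lemma continuous (hf : IsTestFunction f) : Continuous f := hf.contDiff.continuous

protected lemma differentiable (hf : IsTestFunction f) : Differentiable ℝ f :=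
  hf.contDiff.differentiable (by simp)

protected lemma integrable [MeasurableSpace V] [OpensMeasurableSpace V] {μ : Measure V}
    [IsFiniteMeasureOnCompacts μ] (hf : IsTestFunction f) : Integrable f μ :=
  hf.continuous.integrable_of_hasCompactSupport hf.hasCompactSupport

lemma mul_left {k : V → ℝ} (hk : ContDiff ℝ (⊤ : ℕ∞) k) (hf : IsTestFunction f) :
    IsTestFunction fun p => k p * f p :=
  ⟨hk.mul hf.contDiff, hf.hasCompactSupport.mul_left⟩

lemma const_mul (c : ℝ) (hf : IsTestFunction f) : IsTestFunction fun p => c * f p :=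
  mul_left contDiff_const hf

protected lemma add (hf : IsTestFunction f) (hg : IsTestFunction g) :
    IsTestFunction fun p => f p + g p :=
  ⟨hf.contDiff.add hg.contDiff, hf.hasCompactSupport.add hg.hasCompactSupport⟩

protected lemma sub (hf : IsTestFunction f) (hg : IsTestFunction g) :
    IsTestFunction fun p => f p - g p :=
  ⟨hf.contDiff.sub hg.contDiff, hf.hasCompactSupport.sub hg.hasCompactSupport⟩

protected lemma sum {α : Type*} [Fintype α] {f : α → V → ℝ} (hf : ∀ a, IsTestFunction (f a)) :
    IsTestFunction fun p => ∑ a, f a p := by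
  refine ⟨ContDiff.sum fun a _ => (hf a).contDiff,
    HasCompactSupport.intro (isCompact_iUnion fun a => (hf a).hasCompactSupport) fun p hp => ?_⟩
  simp only [Set.mem_iUnion, not_exists] at hp
  exact Finset.sum_eq_zero fun a _ => image_eq_zero_of_notMem_tsupport (hp a)

end NormedSpace

protected lemma deriv {φ : ℝ → ℝ} (hφ : IsTestFunction φ) : IsTestFunction (deriv φ) :=
  ⟨(contDiff_infty_iff_deriv.1 hφ.contDiff).2, hφ.hasCompactSupport.deriv⟩

protected lemma pd {f : Vec4 → ℝ} (hf : IsTestFunction f) (a : Fin 4) : IsTestFunction (pd a f) :=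
  ⟨(hf.contDiff.fderiv_right (by simp)).clm_apply contDiff_const,
    hf.hasCompactSupport.fderiv_apply (𝕜 := ℝ) _⟩

lemma exists_primitive {φ : ℝ → ℝ} (hφ : IsTestFunction φ) (h0 : ∫ t, φ t = 0) :
    ∃ Φ : ℝ → ℝ, IsTestFunction Φ ∧ deriv Φ = φ := by
  obtain ⟨R, hR⟩ := hφ.hasCompactSupport.isBounded.exists_norm_le
  have hzero : ∀ t, R < |t| → φ t = 0 := fun t ht =>
    image_eq_zero_of_notMem_tsupport fun hmem => (hR t hmem).not_gt ht
  let Φ : ℝ → ℝ := fun t => ∫ x in (-|R| - 1)..t, φ x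
  have hΦ : ∀ t, HasDerivAt Φ (φ t) t := fun t =>
    (hφ.continuous.integral_hasStrictDerivAt _ t).hasDerivAt
  have hderiv : deriv Φ = φ := funext fun t => (hΦ t).deriv
  refine ⟨Φ, ⟨contDiff_infty_iff_deriv.2
    ⟨fun t => (hΦ t).differentiableAt, hderiv ▸ hφ.contDiff⟩, ?_⟩, hderiv⟩
  refine HasCompactSupport.intro (isCompact_Icc (a := -|R| - 1) (b := |R| + 1)) fun t ht => ?_
  rw [Set.mem_Icc, not_and_or, not_le, not_le] at ht
  have hRR := le_abs_self R
  rcases ht with ht | ht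
  · refine intervalIntegral.integral_zero_ae (Eventually.of_forall fun x hx => hzero x ?_)
    rw [Set.uIoc_of_ge ht.le] at hx
    linarith [hx.2, neg_le_abs x]
  · refine (intervalIntegral.integral_eq_integral_of_support_subset fun x hx => ?_).trans h0
    have hx' := abs_le.1 (hR x (subset_tsupport φ hx))
    constructor <;> linarith

end IsTestFunction

/-- A fixed smooth bump function of time, of integral one and positive on `[-1, 1]`. -/
def timeBump : ℝ → ℝ :=
  (⟨1, 2, one_pos, one_lt_two⟩ : ContDiffBump (0 : ℝ)).normed volume

lemma isTestFunction_timeBump : IsTestFunction timeBump :=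
  ⟨ContDiffBump.contDiff_normed _, ContDiffBump.hasCompactSupport_normed _⟩

lemma timeBump_nonneg (t : ℝ) : 0 ≤ timeBump t := ContDiffBump.nonneg_normed _ t

lemma integral_timeBump : ∫ t, timeBump t = 1 := ContDiffBump.integral_normed _

lemma timeBump_pos {t : ℝ} (ht : t ∈ Set.Icc (-1 : ℝ) 1) : 0 < timeBump t := by
  refine (timeBump_nonneg t).lt_of_ne' ?_
  rw [← Function.mem_support, timeBump, ContDiffBump.support_normed_eq, Metric.mem_ball,
    dist_zero_right]
  exact (abs_le.2 ht).trans_lt one_lt_two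

lemma pd_mul {f g : Vec4 → ℝ} (hf : Differentiable ℝ f) (hg : Differentiable ℝ g) (a : Fin 4)
    (p : Vec4) : pd a (fun q => f q * g q) p = pd a f p * g p + f p * pd a g p := by
  simp only [pd, fderiv_fun_mul (hf p) (hg p), _root_.add_apply, _root_.smul_apply,
    smul_eq_mul]
  ring

lemma pd_const_mul {f : Vec4 → ℝ} (hf : Differentiable ℝ f) (c : ℝ) (a : Fin 4) (p : Vec4) :
    pd a (fun q => c * f q) p = c * pd a f p := by
  simp [pd, fderiv_const_mul (hf p)]

lemma continuous_pd {f : Vec4 → ℝ} (hf : ContDiff ℝ (⊤ : ℕ∞) f) (a : Fin 4) :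
    Continuous (pd a f) :=
  (hf.continuous_fderiv (by simp)).clm_apply continuous_const

/-- The divergence of a vector field on `ℝ⁴`. -/
def divergence (K : Vec4 → Vec4) (p : Vec4) : ℝ := ∑ a, pd a (fun q => K q a) p

lemma integrable_mul_of_hasCompactSupport {X : Type*} [TopologicalSpace X] [MeasurableSpace X]
    [OpensMeasurableSpace X] {μ : Measure X} [IsFiniteMeasureOnCompacts μ] {k f : X → ℝ}
    (hk : Continuous k) (hf : Continuous f) (hfc : HasCompactSupport f) :
    Integrable (fun p => k p * f p) μ :=
  (hk.mul hf).integrable_of_hasCompactSupport hfc.mul_left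

lemma integral_mul_pd {k f : Vec4 → ℝ} (hk : ContDiff ℝ (⊤ : ℕ∞) k) (hf : IsTestFunction f)
    (a : Fin 4) : ∫ p, k p * pd a f p = -∫ p, pd a k p * f p :=
  integral_mul_fderiv_eq_neg_fderiv_mul_of_integrable
    (integrable_mul_of_hasCompactSupport (continuous_pd hk a) hf.continuous hf.hasCompactSupport)
    (integrable_mul_of_hasCompactSupport hk.continuous (hf.pd a).continuous
      (hf.pd a).hasCompactSupport)
    (integrable_mul_of_hasCompactSupport hk.continuous hf.continuous hf.hasCompactSupport)
    (fun _ _ => hk.differentiable (by simp) _) (fun _ _ => hf.differentiable _)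

lemma sum_integral_mul_pd {K : Vec4 → Vec4} (hK : ∀ a, ContDiff ℝ (⊤ : ℕ∞) fun p => K p a)
    {f : Vec4 → ℝ} (hf : IsTestFunction f) :
    ∑ a, ∫ p, K p a * pd a f p = -∫ p, divergence K p * f p := by
  simp only [divergence, Finset.sum_mul, integral_mul_pd (hK _) hf, Finset.sum_neg_distrib]
  rw [integral_finsetSum _ fun a _ => integrable_mul_of_hasCompactSupport
    (continuous_pd (hK a) a) hf.continuous hf.hasCompactSupport]

/-! ### Concentrating families of densities -/

section Concentration

variable {X ι : Type*} [TopologicalSpace X]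

/-- The family `k` is locally bounded by multiples of the density `ρ`, uniformly in the index. -/
structure IsDominatedBy (k ρ : ι → X → ℝ) : Prop where
  continuous : ∀ n, Continuous (k n)
  exists_bound : ∃ C : X → ℝ, Continuous C ∧ ∀ n p, |k n p| ≤ C p * ρ n p

namespace IsDominatedBy

variable {k ρ : ι → X → ℝ}

lemma of_abs_le (hk : ∀ n, Continuous (k n)) (c : ℝ) (h : ∀ n p, |k n p| ≤ c * ρ n p) :
    IsDominatedBy k ρ :=
  ⟨hk, fun _ => c, continuous_const, h⟩

lemma mul_left (hk : IsDominatedBy k ρ) {u : X → ℝ} (hu : Continuous u) :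
    IsDominatedBy (fun n p => u p * k n p) ρ := by
  obtain ⟨C, hC, hkC⟩ := hk.exists_bound
  refine ⟨fun n => hu.mul (hk.continuous n), fun p => |u p| * C p, hu.abs.mul hC, fun n p => ?_⟩
  rw [abs_mul, mul_assoc]
  exact mul_le_mul_of_nonneg_left (hkC n p) (abs_nonneg _)

protected lemma sum {α : Type*} [Fintype α] {k : α → ι → X → ℝ}
    (hk : ∀ a, IsDominatedBy (k a) ρ) : IsDominatedBy (fun n p => ∑ a, k a n p) ρ := by
  choose C hC hkC using fun a => (hk a).exists_bound
  refine ⟨fun n => continuous_finsetSum _ fun a _ => (hk a).continuous n, fun p => ∑ a, C a p,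
    continuous_finsetSum _ fun a _ => hC a, fun n p => ?_⟩
  rw [Finset.sum_mul]
  exact (Finset.abs_sum_le_sum_abs _ _).trans (Finset.sum_le_sum fun a _ => hkC a n p)

end IsDominatedBy

variable [MeasurableSpace X]

/-- The nonnegative densities `ρ n` asymptotically assign no mass to compact sets disjoint
from `S`. -/
structure IsNegligibleOff (μ : Measure X) (l : Filter ι) (S : Set X) (ρ : ι → X → ℝ) : Prop where
  continuous : ∀ n, Continuous (ρ n)
  nonneg : ∀ n p, 0 ≤ ρ n p
  tendsto_integral : ∀ f : X → ℝ, Continuous f → HasCompactSupport f → (∀ p ∈ S, f =ᶠ[𝓝 p] 0) →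
    Tendsto (fun n => ∫ p, ρ n p * f p ∂μ) l (𝓝 0)

/-- The nonnegative densities `ρ n` asymptotically concentrate on `S`, the mass in each compact set
being bounded along the filter `l`. -/
structure ConcentratesOn (μ : Measure X) (l : Filter ι) (S : Set X) (ρ : ι → X → ℝ) : Prop
    extends IsNegligibleOff μ l S ρ where
  exists_integral_le : ∀ f : X → ℝ, Continuous f → HasCompactSupport f →
    ∃ M, ∀ᶠ n in l, ∫ p, ρ n p * f p ∂μ ≤ M

variable {μ : Measure X} {l : Filter ι} {S : Set X} {k ρ : ι → X → ℝ} {f g : X → ℝ}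

lemma ConcentratesOn.comp_tendsto (h : ConcentratesOn μ l S ρ) {ι' : Type*} {l' : Filter ι'}
    {σ : ι' → ι} (hσ : Tendsto σ l' l) : ConcentratesOn μ l' S fun n => ρ (σ n) where
  continuous n := h.continuous (σ n)
  nonneg n := h.nonneg (σ n)
  tendsto_integral f hf hfc hfS := (h.tendsto_integral f hf hfc hfS).comp hσ
  exists_integral_le f hf hfc :=
    (h.exists_integral_le f hf hfc).imp fun _ hM => hσ.eventually hM

variable [OpensMeasurableSpace X] [IsFiniteMeasureOnCompacts μ]

lemma integral_mul_add_const_mul {k : X → ℝ} (hk : Continuous k) (hf : Continuous f)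
    (hfc : HasCompactSupport f) (hg : Continuous g) (hgc : HasCompactSupport g) (c : ℝ) :
    ∫ p, k p * (f p + c * g p) ∂μ = ∫ p, k p * f p ∂μ + c * ∫ p, k p * g p ∂μ := by
  simp only [mul_add, mul_left_comm _ c]
  rw [integral_add (integrable_mul_of_hasCompactSupport hk hf hfc)
    ((integrable_mul_of_hasCompactSupport hk hg hgc).const_mul c), integral_const_mul]

lemma integral_mul_sub {k : X → ℝ} (hk : Continuous k) (hf : Continuous f)
    (hfc : HasCompactSupport f) (hg : Continuous g) (hgc : HasCompactSupport g) :
    ∫ p, k p * (f p - g p) ∂μ = ∫ p, k p * f p ∂μ - ∫ p, k p * g p ∂μ := by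
  simpa [sub_eq_add_neg] using integral_mul_add_const_mul hk hf hfc hg hgc (-1)

lemma IsDominatedBy.exists_abs_integral_le (hk : IsDominatedBy k ρ) (hρ : ∀ n, Continuous (ρ n))
    (hρ0 : ∀ n p, 0 ≤ ρ n p) :
    ∃ C : X → ℝ, Continuous C ∧ ∀ f : X → ℝ, Continuous f → HasCompactSupport f →
      ∀ n, |∫ p, k n p * f p ∂μ| ≤ ∫ p, ρ n p * |C p * f p| ∂μ := by
  obtain ⟨C, hC, hkC⟩ := hk.exists_bound
  refine ⟨C, hC, fun f hf hfc n => ?_⟩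
  have hinteg : Integrable (fun p => ρ n p * |C p * f p|) μ :=
    integrable_mul_of_hasCompactSupport (hρ n) (hC.mul hf).abs hfc.mul_left.abs
  rw [← Real.norm_eq_abs]
  refine norm_integral_le_of_norm_le hinteg (Eventually.of_forall fun p => ?_)
  calc |k n p * f p| = |k n p| * |f p| := abs_mul _ _
    _ ≤ |C p * ρ n p| * |f p| :=
        mul_le_mul_of_nonneg_right ((hkC n p).trans (le_abs_self _)) (abs_nonneg _)
    _ = ρ n p * |C p * f p| := by rw [abs_mul, abs_mul, abs_of_nonneg (hρ0 n p)]; ring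

namespace IsNegligibleOff

lemma integral_mono (h : IsNegligibleOff μ l S ρ) (hf : Continuous f) (hfc : HasCompactSupport f)
    (hg : Continuous g) (hgc : HasCompactSupport g) (hfg : ∀ p, f p ≤ g p) (n : ι) :
    ∫ p, ρ n p * f p ∂μ ≤ ∫ p, ρ n p * g p ∂μ :=
  MeasureTheory.integral_mono
    (integrable_mul_of_hasCompactSupport (h.continuous n) hf hfc)
    (integrable_mul_of_hasCompactSupport (h.continuous n) hg hgc)
    fun p => mul_le_mul_of_nonneg_left (hfg p) (h.nonneg n p)

lemma tendsto_integral_mul_zero (h : IsNegligibleOff μ l S ρ) (hk : IsDominatedBy k ρ)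
    (hf : Continuous f) (hfc : HasCompactSupport f) (hfS : ∀ p ∈ S, f =ᶠ[𝓝 p] 0) :
    Tendsto (fun n => ∫ p, k n p * f p ∂μ) l (𝓝 0) := by
  obtain ⟨C, hC, hkC⟩ := hk.exists_abs_integral_le (μ := μ) h.continuous h.nonneg
  refine squeeze_zero_norm (hkC f hf hfc) (h.tendsto_integral _ (hC.mul hf).abs
    (hfc.mul_left.abs) fun p hp => ?_)
  filter_upwards [hfS p hp] with q hq
  simp [hq]

end IsNegligibleOff

namespace ConcentratesOn

lemma tendsto_integral_mul_abs (h : ConcentratesOn μ l S ρ) (hf : Continuous f)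
    (hfc : HasCompactSupport f) (hfS : ∀ p ∈ S, f p = 0) :
    Tendsto (fun n => ∫ p, ρ n p * |f p| ∂μ) l (𝓝 0) := by
  -- `|f| ≤ δ √|f| + (|f| - δ √|f|)⁺`, where the last function vanishes near `S`.
  have hr : Continuous fun p => √|f p| := hf.abs.sqrt
  have hrc : HasCompactSupport fun p => √|f p| :=
    hfc.comp_left (g := fun y => √|y|) (by simp)
  obtain ⟨M, hM⟩ := h.exists_integral_le _ hr hrc
  refine tendsto_order.2 ⟨fun a ha => Eventually.of_forall fun n =>
    ha.trans_le (integral_nonneg fun p => mul_nonneg (h.nonneg n p) (abs_nonneg _)), fun ε hε => ?_⟩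
  obtain ⟨δ, hδ, hδM⟩ : ∃ δ > 0, δ * M < ε := by
    refine ⟨ε / (|M| + 1), by positivity, ?_⟩
    rw [div_mul_eq_mul_div, div_lt_iff₀ (by positivity)]
    gcongr
    linarith [le_abs_self M]
  let rest : X → ℝ := fun p => max (|f p| - δ * √|f p|) 0
  have hrest : Continuous rest := (hf.abs.sub (continuous_const.mul hr)).max continuous_const
  have hrestc : HasCompactSupport rest :=
    hfc.comp_left (g := fun y => max (|y| - δ * √|y|) 0) (by simp)
  have hrest0 : ∀ p ∈ S, rest =ᶠ[𝓝 p] 0 := fun p hp => by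
    filter_upwards [hr.continuousAt.eventually_lt continuousAt_const
      (show √|f p| < δ by simpa [hfS p hp] using hδ)] with q hq
    refine max_eq_right (sub_nonpos.2 ?_)
    nth_rw 1 [← Real.mul_self_sqrt (abs_nonneg (f q))]
    gcongr
  filter_upwards [hM, (h.tendsto_integral _ hrest hrestc hrest0).eventually_lt_const
    (sub_pos.2 hδM)] with n hn hn'
  calc ∫ p, ρ n p * |f p| ∂μ ≤ ∫ p, ρ n p * (rest p + δ * √|f p|) ∂μ :=
        h.integral_mono hf.abs (hfc.abs)
          (hrest.add (continuous_const.mul hr)) (hrestc.add hrc.mul_left)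
          (fun p => sub_le_iff_le_add.1 (le_max_left _ _)) n
    _ = ∫ p, ρ n p * rest p ∂μ + δ * ∫ p, ρ n p * √|f p| ∂μ :=
        integral_mul_add_const_mul (h.continuous n) hrest hrestc hr hrc δ
    _ < ε := by linarith [mul_le_mul_of_nonneg_left hn hδ.le]

lemma tendsto_integral_mul_zero (h : ConcentratesOn μ l S ρ) (hk : IsDominatedBy k ρ)
    (hf : Continuous f) (hfc : HasCompactSupport f) (hfS : ∀ p ∈ S, f p = 0) :
    Tendsto (fun n => ∫ p, k n p * f p ∂μ) l (𝓝 0) := by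
  obtain ⟨C, hC, hkC⟩ := hk.exists_abs_integral_le (μ := μ) h.continuous h.nonneg
  exact squeeze_zero_norm (hkC f hf hfc) (h.tendsto_integral_mul_abs (hC.mul hf) hfc.mul_left
    fun p hp => by simp [hfS p hp])

lemma tendsto_integral_sub (h : ConcentratesOn μ l S ρ) (hk : IsDominatedBy k ρ)
    (hf : Continuous f) (hfc : HasCompactSupport f) (hg : Continuous g)
    (hgc : HasCompactSupport g) (hfg : Set.EqOn f g S) :
    Tendsto (fun n => ∫ p, k n p * f p ∂μ - ∫ p, k n p * g p ∂μ) l (𝓝 0) :=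
  (h.tendsto_integral_mul_zero hk (hf.sub hg) (hfc.sub hgc)
    fun _ hp => sub_eq_zero.2 (hfg hp)).congr
    fun n => integral_mul_sub (hk.continuous n) hf hfc hg hgc

lemma exists_abs_integral_mul_le (h : ConcentratesOn μ l S ρ) (hk : IsDominatedBy k ρ)
    (hf : Continuous f) (hfc : HasCompactSupport f) :
    ∃ M, ∀ᶠ n in l, |∫ p, k n p * f p ∂μ| ≤ M := by
  obtain ⟨C, hC, hkC⟩ := hk.exists_abs_integral_le (μ := μ) h.continuous h.nonneg
  obtain ⟨M, hM⟩ := h.exists_integral_le _ (hC.mul hf).abs (hfc.mul_left.abs)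
  exact ⟨M, hM.mono fun n hn => (hkC f hf hfc n).trans hn⟩

end ConcentratesOn

end Concentration

/-! ### Curves parametrized by coordinate time -/

/-- The curve `Γ` is smooth and parametrized by the coordinate time `p 0`. -/
structure IsTimeCurve (Γ : ℝ → Vec4) : Prop where
  contDiff : ContDiff ℝ (⊤ : ℕ∞) Γ
  time : ∀ t, Γ t 0 = t

/-- The displacement in direction `i` from the point of the curve `Γ` with the same time
coordinate. -/
def offset (Γ : ℝ → Vec4) (i : Fin 4) (p : Vec4) : ℝ := p i - Γ (p 0) i

/-- The squared length of the displacement from the simultaneous point of the curve `Γ`. -/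
def sqOffset (Γ : ℝ → Vec4) (p : Vec4) : ℝ := ∑ i, offset Γ i p ^ 2

/-- The extension of a function `φ` of time to a function on `ℝ⁴` which equals `φ (p 0)` near the
curve `Γ` and vanishes outside a tube around it. -/
def tubeLift (Γ : ℝ → Vec4) (φ : ℝ → ℝ) (p : Vec4) : ℝ :=
  φ (p 0) * Real.smoothTransition (2 - sqOffset Γ p)

lemma hasFDerivAt_coord (i : Fin 4) (p : Vec4) :
    HasFDerivAt (fun q : Vec4 => q i) (ContinuousLinearMap.proj (R := ℝ) i) p :=
  hasFDerivAt_apply i p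

section TubeLift

variable {Γ : ℝ → Vec4} {φ ψ : ℝ → ℝ}

lemma tubeLift_mono (h : ∀ t, φ t ≤ ψ t) (p : Vec4) : tubeLift Γ φ p ≤ tubeLift Γ ψ p :=
  mul_le_mul_of_nonneg_right (h _) (Real.smoothTransition.nonneg _)

lemma tubeLift_nonneg (h : ∀ t, 0 ≤ φ t) (p : Vec4) : 0 ≤ tubeLift Γ φ p :=
  mul_nonneg (h _) (Real.smoothTransition.nonneg _)

lemma tubeLift_eq_zero {K : Set ℝ} (hK : Function.support φ ⊆ K) {p : Vec4}
    (hp : ¬ (p 0 ∈ K ∧ sqOffset Γ p ≤ 2)) : tubeLift Γ φ p = 0 := by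
  rcases not_and_or.1 hp with h0 | h2
  · simp [tubeLift, Function.notMem_support.1 fun h => h0 (hK h)]
  · simp [tubeLift, Real.smoothTransition.zero_of_nonpos (sub_nonpos.2 (not_le.1 h2).le)]

end TubeLift

namespace IsTimeCurve

variable {Γ : ℝ → Vec4} {φ : ℝ → ℝ}

protected lemma continuous (hΓ : IsTimeCurve Γ) : Continuous Γ := hΓ.contDiff.continuous

lemma contDiff_coord (hΓ : IsTimeCurve Γ) (i : Fin 4) : ContDiff ℝ (⊤ : ℕ∞) fun t => Γ t i :=
  contDiff_pi.1 hΓ.contDiff i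

lemma contDiff_deriv (hΓ : IsTimeCurve Γ) : ContDiff ℝ (⊤ : ℕ∞) (deriv Γ) :=
  (contDiff_infty_iff_deriv.1 hΓ.contDiff).2

lemma contDiff_deriv_coord (hΓ : IsTimeCurve Γ) (i : Fin 4) :
    ContDiff ℝ (⊤ : ℕ∞) fun t => deriv Γ t i :=
  contDiff_pi.1 hΓ.contDiff_deriv i

lemma hasDerivAt (hΓ : IsTimeCurve Γ) (t : ℝ) : HasDerivAt Γ (deriv Γ t) t :=
  (hΓ.contDiff.differentiable (by simp) t).hasDerivAt

lemma deriv_zero (hΓ : IsTimeCurve Γ) (t : ℝ) : deriv Γ t 0 = 1 := by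
  have h0 : HasDerivAt (fun t => Γ t 0) (deriv Γ t 0) t := hasDerivAt_pi.1 (hΓ.hasDerivAt t) 0
  rw [funext hΓ.time] at h0
  exact h0.unique (hasDerivAt_id t)

lemma offset_self (hΓ : IsTimeCurve Γ) (i : Fin 4) (t : ℝ) : offset Γ i (Γ t) = 0 := by
  simp [offset, hΓ.time]

lemma contDiff_offset (hΓ : IsTimeCurve Γ) (i : Fin 4) : ContDiff ℝ (⊤ : ℕ∞) (offset Γ i) :=
  (contDiff_apply ℝ ℝ i).sub ((hΓ.contDiff_coord i).comp (contDiff_apply ℝ ℝ 0))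

lemma contDiff_sqOffset (hΓ : IsTimeCurve Γ) : ContDiff ℝ (⊤ : ℕ∞) (sqOffset Γ) :=
  ContDiff.sum fun i _ => (hΓ.contDiff_offset i).pow 2

lemma sqOffset_self (hΓ : IsTimeCurve Γ) (t : ℝ) : sqOffset Γ (Γ t) = 0 := by
  simp [sqOffset, hΓ.offset_self]

lemma pd_offset (hΓ : IsTimeCurve Γ) (i a : Fin 4) (p : Vec4) :
    pd a (offset Γ i) p = (if a = i then 1 else 0) - (if a = 0 then deriv Γ (p 0) i else 0) := by
  have hΓi :=
    (hasDerivAt_pi.1 (hΓ.hasDerivAt (p 0)) i).comp_hasFDerivAt p (hasFDerivAt_coord 0 p)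
  have hoff : HasFDerivAt (offset Γ i) _ p := (hasFDerivAt_coord i p).sub hΓi
  rw [pd, hoff.fderiv]
  simp [Pi.single_apply, eq_comm]

lemma isCompact_tube (hΓ : IsTimeCurve Γ) {K : Set ℝ} (hK : IsCompact K) :
    IsCompact {p : Vec4 | p 0 ∈ K ∧ sqOffset Γ p ≤ 2} := by
  have hclosed : IsClosed {p : Vec4 | p 0 ∈ K ∧ sqOffset Γ p ≤ 2} :=
    (hK.isClosed.preimage (continuous_apply 0)).inter
      (isClosed_le hΓ.contDiff_sqOffset.continuous continuous_const)
  obtain ⟨M, hM⟩ := (hK.image hΓ.continuous).isBounded.exists_norm_le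
  refine Metric.isCompact_of_isClosed_isBounded hclosed
    (isBounded_iff_forall_norm_le.2 ⟨M + 2, fun p hp => ?_⟩)
  have hΓp : ‖Γ (p 0)‖ ≤ M := hM _ ⟨p 0, hp.1, rfl⟩
  refine (pi_norm_le_iff_of_nonneg (by linarith [norm_nonneg (Γ (p 0))])).2 fun i => ?_
  have hsq : offset Γ i p ^ 2 ≤ 2 :=
    (Finset.single_le_sum (f := fun i => offset Γ i p ^ 2) (fun j _ => sq_nonneg _)
      (Finset.mem_univ i)).trans hp.2
  calc ‖p i‖ = ‖Γ (p 0) i + offset Γ i p‖ := by simp [offset]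
    _ ≤ ‖Γ (p 0) i‖ + ‖offset Γ i p‖ := norm_add_le _ _
    _ ≤ M + 2 := add_le_add ((norm_le_pi_norm _ i).trans hΓp)
      (abs_le_of_sq_le_sq (by linarith) (by norm_num))

lemma tubeLift_self (hΓ : IsTimeCurve Γ) (φ : ℝ → ℝ) (t : ℝ) : tubeLift Γ φ (Γ t) = φ t := by
  simp [tubeLift, hΓ.sqOffset_self, hΓ.time, Real.smoothTransition.one_of_one_le]

lemma continuous_tubeLift (hΓ : IsTimeCurve Γ) (hφ : Continuous φ) : Continuous (tubeLift Γ φ) :=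
  (hφ.comp (continuous_apply 0)).mul (Real.smoothTransition.continuous.comp
    (continuous_const.sub hΓ.contDiff_sqOffset.continuous))

lemma hasCompactSupport_tubeLift (hΓ : IsTimeCurve Γ) (hφ : HasCompactSupport φ) :
    HasCompactSupport (tubeLift Γ φ) :=
  HasCompactSupport.intro (hΓ.isCompact_tube hφ) fun _ hp =>
    tubeLift_eq_zero (subset_tsupport φ) hp

lemma isTestFunction_tubeLift (hΓ : IsTimeCurve Γ) (hφ : IsTestFunction φ) :
    IsTestFunction (tubeLift Γ φ) :=
  ⟨(hφ.contDiff.comp (contDiff_apply ℝ ℝ 0)).mul (Real.smoothTransition.contDiff.comp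
    (contDiff_const.sub hΓ.contDiff_sqOffset)), hΓ.hasCompactSupport_tubeLift hφ.hasCompactSupport⟩

lemma tubeLift_eventuallyEq (hΓ : IsTimeCurve Γ) (φ : ℝ → ℝ) (t : ℝ) :
    tubeLift Γ φ =ᶠ[𝓝 (Γ t)] fun p => φ (p 0) := by
  filter_upwards [hΓ.contDiff_sqOffset.continuous.continuousAt.eventually_lt continuousAt_const
    (show sqOffset Γ (Γ t) < 1 by simp [hΓ.sqOffset_self])] with p hp
  simp [tubeLift, Real.smoothTransition.one_of_one_le (show 1 ≤ 2 - sqOffset Γ p by linarith)]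

lemma pd_tubeLift_eventuallyEq (hΓ : IsTimeCurve Γ) (hφ : Differentiable ℝ φ) (a : Fin 4) (t : ℝ) :
    pd a (tubeLift Γ φ) =ᶠ[𝓝 (Γ t)] if a = 0 then tubeLift Γ (deriv φ) else 0 := by
  filter_upwards [(hΓ.tubeLift_eventuallyEq φ t).eventuallyEq_nhds,
    hΓ.tubeLift_eventuallyEq (deriv φ) t] with p hp hp'
  have hcomp : HasFDerivAt (fun q : Vec4 => φ (q 0)) _ p :=
    (hφ (p 0)).hasDerivAt.comp_hasFDerivAt p (hasFDerivAt_coord 0 p)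
  rw [pd, hp.fderiv_eq, hcomp.fderiv]
  split_ifs with ha
  · simp [hp', ha]
  · simp [Ne.symm ha]

lemma hasCompactSupport_comp (hΓ : IsTimeCurve Γ) {f : Vec4 → ℝ} (hf : HasCompactSupport f) :
    HasCompactSupport fun t => f (Γ t) :=
  HasCompactSupport.intro (hf.image (continuous_apply (0 : Fin 4))) fun t ht => by
    by_contra hne
    exact ht ⟨Γ t, subset_tsupport f hne, hΓ.time t⟩

lemma isTestFunction_comp (hΓ : IsTimeCurve Γ) {f : Vec4 → ℝ} (hf : IsTestFunction f) :
    IsTestFunction fun t => f (Γ t) :=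
  ⟨hf.contDiff.comp hΓ.contDiff, hΓ.hasCompactSupport_comp hf.hasCompactSupport⟩

lemma hasDerivAt_comp (hΓ : IsTimeCurve Γ) {f : Vec4 → ℝ} (hf : Differentiable ℝ f) (t : ℝ) :
    HasDerivAt (fun s => f (Γ s)) (∑ a, deriv Γ t a * pd a f (Γ t)) t := by
  refine ((hf (Γ t)).hasFDerivAt.comp_hasDerivAt t (hΓ.hasDerivAt t)).congr_deriv ?_
  conv_lhs => rw [pi_eq_sum_univ' (deriv Γ t), map_sum]
  simp [pd]

end IsTimeCurve

/-! ### Flows concentrating on a curve -/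

/-- The vector fields `K n` and their divergences are locally bounded by multiples of the
density `ρ n`, uniformly in the index. -/
structure IsDominatedFlow {ι : Type*} (ρ : ι → Vec4 → ℝ) (K : ι → Vec4 → Vec4) : Prop where
  contDiff : ∀ n a, ContDiff ℝ (⊤ : ℕ∞) fun p => K n p a
  isDominatedBy : ∀ a, IsDominatedBy (fun n p => K n p a) ρ
  isDominatedBy_divergence : IsDominatedBy (fun n => divergence (K n)) ρ

/-- The densities `k n` asymptotically annihilate every test function whose restriction to the
curve `Γ` is the derivative along `Γ` of a test function. -/
def AsymptoticallyConserved {ι : Type*} (Γ : ℝ → Vec4) (l : Filter ι) (k : ι → Vec4 → ℝ) : Prop :=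
  ∀ f g : Vec4 → ℝ, IsTestFunction f → IsTestFunction g →
    (∀ t, HasDerivAt (fun s => f (Γ s)) (g (Γ t)) t) →
    Tendsto (fun n => ∫ p, k n p * g p) l (𝓝 0)

section Transport

variable {ι : Type*} {l : Filter ι} {Γ : ℝ → Vec4} {ρ : ι → Vec4 → ℝ} {K : ι → Vec4 → Vec4}
  {f g : Vec4 → ℝ}

lemma IsTimeCurve.contDiff_deriv_time (hΓ : IsTimeCurve Γ) (i : Fin 4) :
    ContDiff ℝ (⊤ : ℕ∞) fun p : Vec4 => deriv Γ (p 0) i :=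
  (hΓ.contDiff_deriv_coord i).comp (contDiff_apply ℝ ℝ 0)

lemma IsTimeCurve.integral_transverse (hΓ : IsTimeCurve Γ) {K : Vec4 → Vec4}
    (hK : ∀ a, ContDiff ℝ (⊤ : ℕ∞) fun p => K p a) (hf : IsTestFunction f) (i : Fin 4) :
    (∫ p, K p i * f p) - ∫ p, K p 0 * (deriv Γ (p 0) i * f p) =
      -(∫ p, divergence K p * (offset Γ i p * f p)) -
        ∑ a, ∫ p, K p a * (offset Γ i p * pd a f p) := by
  have hVf := hf.mul_left (hΓ.contDiff_deriv_time i)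
  have hoff (a) := (hf.pd a).mul_left (hΓ.contDiff_offset i)
  have hpd (a p) : pd a (fun q => offset Γ i q * f q) p = offset Γ i p * pd a f p +
      (if a = i then 1 else 0) * f p + (if a = 0 then -1 else 0) * (deriv Γ (p 0) i * f p) := by
    rw [pd_mul ((hΓ.contDiff_offset i).differentiable (by simp)) hf.differentiable, hΓ.pd_offset]
    split_ifs <;> ring
  have hinteg (a) : ∫ p, K p a * pd a (fun q => offset Γ i q * f q) p =
      (∫ p, K p a * (offset Γ i p * pd a f p)) +
        (if a = i then 1 else 0) * (∫ p, K p a * f p) +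
        (if a = 0 then -1 else 0) * ∫ p, K p a * (deriv Γ (p 0) i * f p) := by
    have hfa := hf.const_mul (if a = i then 1 else 0)
    simp only [hpd]
    rw [integral_mul_add_const_mul (hK a).continuous ((hoff a).add hfa).continuous
      ((hoff a).add hfa).hasCompactSupport hVf.continuous hVf.hasCompactSupport,
      integral_mul_add_const_mul (hK a).continuous (hoff a).continuous (hoff a).hasCompactSupport
      hf.continuous hf.hasCompactSupport]
  rw [← sum_integral_mul_pd hK (hf.mul_left (hΓ.contDiff_offset i))]
  simp only [hinteg, Finset.sum_add_distrib, ite_mul, one_mul, zero_mul, neg_mul,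
    Finset.sum_ite_eq', Finset.mem_univ, if_true]
  ring

namespace IsDominatedFlow

lemma tendsto_transverse (hK : IsDominatedFlow ρ K) (hΓ : IsTimeCurve Γ)
    (hρ : ConcentratesOn volume l (Set.range Γ) ρ) (hf : IsTestFunction f) (i : Fin 4) :
    Tendsto (fun n => (∫ p, K n p i * f p) - ∫ p, K n p 0 * (deriv Γ (p 0) i * f p)) l (𝓝 0) := by
  have hvanish {k : ι → Vec4 → ℝ} (hk : IsDominatedBy k ρ) {g : Vec4 → ℝ} (hg : IsTestFunction g) :
      Tendsto (fun n => ∫ p, k n p * (offset Γ i p * g p)) l (𝓝 0) := by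
    have hog := hg.mul_left (hΓ.contDiff_offset i)
    exact hρ.tendsto_integral_mul_zero hk hog.continuous hog.hasCompactSupport
      (Set.forall_mem_range.2 fun t => by simp [hΓ.offset_self])
  have hlim := (hvanish hK.isDominatedBy_divergence hf).neg.sub
    (tendsto_finsetSum Finset.univ fun a _ => hvanish (hK.isDominatedBy a) (hf.pd a))
  simpa [hΓ.integral_transverse (hK.contDiff _) hf i] using hlim

lemma tendsto_transverse_sum (hK : IsDominatedFlow ρ K) (hΓ : IsTimeCurve Γ)
    (hρ : ConcentratesOn volume l (Set.range Γ) ρ) {α : Fin 4 → Vec4 → ℝ}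
    (hα : ∀ a, IsTestFunction (α a)) :
    Tendsto (fun n => (∑ a, ∫ p, K n p a * α a p) - ∫ p, K n p 0 * ∑ a, deriv Γ (p 0) a * α a p)
      l (𝓝 0) := by
  have hV (a) := (hα a).mul_left (hΓ.contDiff_deriv_time a)
  have hlim := tendsto_finsetSum Finset.univ fun a _ => hK.tendsto_transverse hΓ hρ (hα a) a
  simp only [Finset.sum_const_zero] at hlim
  refine hlim.congr fun n => ?_
  simp only [Finset.mul_sum, Finset.sum_sub_distrib]
  rw [integral_finsetSum _ fun a _ => integrable_mul_of_hasCompactSupport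
    (hK.contDiff n 0).continuous (hV a).continuous (hV a).hasCompactSupport]

lemma tendsto_transport (hK : IsDominatedFlow ρ K) (hΓ : IsTimeCurve Γ)
    (hρ : ConcentratesOn volume l (Set.range Γ) ρ) (hf : IsTestFunction f) (hg : IsTestFunction g)
    (hfg : ∀ t, HasDerivAt (fun s => f (Γ s)) (g (Γ t)) t) :
    Tendsto (fun n => (∫ p, K n p 0 * g p) + ∫ p, divergence (K n) p * f p) l (𝓝 0) := by
  have hVsum := IsTestFunction.sum fun a => (hf.pd a).mul_left (hΓ.contDiff_deriv_time a)
  have hg_eq : Set.EqOn g (fun p => ∑ a, deriv Γ (p 0) a * pd a f p) (Set.range Γ) :=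
    Set.forall_mem_range.2 fun t => by
      simpa [hΓ.time] using (hfg t).unique (hΓ.hasDerivAt_comp hf.differentiable t)
  have hlim := (hρ.tendsto_integral_sub (hK.isDominatedBy 0) hg.continuous hg.hasCompactSupport
    hVsum.continuous hVsum.hasCompactSupport hg_eq).sub (hK.tendsto_transverse_sum hΓ hρ hf.pd)
  rw [sub_zero] at hlim
  refine hlim.congr fun n => ?_
  rw [sum_integral_mul_pd (hK.contDiff n) hf]
  ring

end IsDominatedFlow

lemma AsymptoticallyConserved.tendsto_sub {k : ι → Vec4 → ℝ} (hk : AsymptoticallyConserved Γ l k)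
    (hk_cont : ∀ n, Continuous (k n)) (hΓ : IsTimeCurve Γ) (hf : IsTestFunction f) :
    Tendsto (fun n => (∫ p, k n p * f p) -
      (∫ t, f (Γ t)) * ∫ p, k n p * tubeLift Γ timeBump p) l (𝓝 0) := by
  have hfΓ := hΓ.isTestFunction_comp hf
  have hbump := isTestFunction_timeBump.const_mul (∫ t, f (Γ t))
  have hlift := hΓ.isTestFunction_tubeLift isTestFunction_timeBump
  obtain ⟨Φ, hΦ, hΦ'⟩ := (hfΓ.sub hbump).exists_primitive (by
    rw [integral_sub hfΓ.integrable hbump.integrable, integral_const_mul, integral_timeBump,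
      mul_one, sub_self])
  have hlim := hk (tubeLift Γ Φ) _ (hΓ.isTestFunction_tubeLift hΦ)
    (hf.sub (hlift.const_mul (∫ t, f (Γ t)))) fun t => by
      simp only [hΓ.tubeLift_self]
      exact congrFun hΦ' t ▸ (hΦ.differentiable t).hasDerivAt
  refine hlim.congr fun n => ?_
  simpa [neg_mul, sub_eq_add_neg] using integral_mul_add_const_mul (hk_cont n) hf.continuous
    hf.hasCompactSupport hlift.continuous hlift.hasCompactSupport (-∫ t, f (Γ t))

end Transport

/-! ### Local energy bounds -/

/-- The time coordinate, damped by a Gaussian and cut off outside `[-(R + 1), R + 1]`, so that it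
decreases faster than `C` times its absolute value for `1 ≤ |t| ≤ R`. As a multiplier in the energy
balance it bounds the energy up to time `R` by the energy near time zero. -/
def dampedTime (C R t : ℝ) : ℝ :=
  t * Real.exp (-((C + 2) / 2 * t ^ 2)) * Real.smoothTransition (R ^ 2 + 1 - t ^ 2)

/-- The amount by which the decay rate of `g` exceeds `C * |g|`. -/
def dampingExcess (C : ℝ) (g : ℝ → ℝ) (t : ℝ) : ℝ := -deriv g t - C * |g t|

section DampedTime

variable {C R : ℝ}

lemma hasDerivAt_dampedTime (C R t : ℝ) :
    HasDerivAt (dampedTime C R)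
      ((1 - (C + 2) * t ^ 2) * Real.exp (-((C + 2) / 2 * t ^ 2)) *
          Real.smoothTransition (R ^ 2 + 1 - t ^ 2) -
        2 * t ^ 2 * Real.exp (-((C + 2) / 2 * t ^ 2)) *
          deriv Real.smoothTransition (R ^ 2 + 1 - t ^ 2)) t := by
  have hgauss : HasDerivAt (fun t : ℝ => -((C + 2) / 2 * t ^ 2)) (-((C + 2) * t)) t :=
    ((hasDerivAt_pow 2 t).const_mul _).neg.congr_deriv (by ring)
  have hcut : HasDerivAt (fun t : ℝ => R ^ 2 + 1 - t ^ 2) (-(2 * t)) t := by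
    simpa using (hasDerivAt_pow 2 t).const_sub (R ^ 2 + 1)
  have hsmooth : Differentiable ℝ Real.smoothTransition :=
    (Real.smoothTransition.contDiff (n := 1)).differentiable (by simp)
  refine (((hasDerivAt_id' t).fun_mul hgauss.exp).fun_mul
    ((hsmooth _).hasDerivAt.comp t hcut)).congr_deriv ?_
  rw [Function.comp_apply]
  ring

lemma support_dampedTime_subset (hR : 0 ≤ R) :
    Function.support (dampedTime C R) ⊆ Set.Icc (-(R + 1)) (R + 1) := fun t ht => by
  by_contra hout
  have habs : R + 1 < |t| := not_le.1 fun hle => hout (abs_le.1 hle)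
  have hcut : R ^ 2 + 1 - t ^ 2 ≤ 0 := by
    rw [← sq_abs t]
    nlinarith
  exact ht (by simp [dampedTime, Real.smoothTransition.zero_of_nonpos hcut])

lemma isTestFunction_dampedTime (hR : 0 ≤ R) : IsTestFunction (dampedTime C R) where
  contDiff := (contDiff_id.mul (contDiff_const.mul (contDiff_id.pow 2)).neg.exp).mul
    (Real.smoothTransition.contDiff.comp (contDiff_const.sub (contDiff_id.pow 2)))
  hasCompactSupport := HasCompactSupport.of_support_subset_isCompact isCompact_Icc
    (support_dampedTime_subset hR)

lemma le_dampingExcess_dampedTime (hC : 0 ≤ C) {t : ℝ} (ht : 1 ≤ |t|) :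
    Real.exp (-((C + 2) / 2 * t ^ 2)) * Real.smoothTransition (R ^ 2 + 1 - t ^ 2) ≤
      dampingExcess C (dampedTime C R) t := by
  have hexp := Real.exp_pos (-((C + 2) / 2 * t ^ 2))
  have hcut := Real.smoothTransition.nonneg (R ^ 2 + 1 - t ^ 2)
  have hcut' : 0 ≤ deriv Real.smoothTransition (R ^ 2 + 1 - t ^ 2) :=
    Real.smoothTransition.monotone.deriv_nonneg
  have hcoeff : 1 ≤ (C + 2) * t ^ 2 - 1 - C * |t| := by
    rw [← sq_abs t]
    nlinarith [mul_nonneg hC (sub_nonneg.2 ht)]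
  rw [dampingExcess, (hasDerivAt_dampedTime C R t).deriv, dampedTime, abs_mul, abs_mul,
    abs_of_pos hexp, abs_of_nonneg hcut]
  have hdrop : 0 ≤ 2 * t ^ 2 * Real.exp (-((C + 2) / 2 * t ^ 2)) *
      deriv Real.smoothTransition (R ^ 2 + 1 - t ^ 2) := mul_nonneg (by positivity) hcut'
  linarith [mul_le_mul_of_nonneg_right hcoeff (mul_nonneg hexp.le hcut)]

lemma dampingExcess_dampedTime_nonneg (hC : 0 ≤ C) {t : ℝ} (ht : 1 ≤ |t|) :
    0 ≤ dampingExcess C (dampedTime C R) t :=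
  (mul_nonneg (Real.exp_pos _).le (Real.smoothTransition.nonneg _)).trans
    (le_dampingExcess_dampedTime hC ht)

lemma dampingExcess_dampedTime_pos (hC : 0 ≤ C) {t : ℝ} (ht : 1 ≤ |t|) (htR : |t| ≤ R) :
    0 < dampingExcess C (dampedTime C R) t := by
  refine (mul_pos (Real.exp_pos _) (Real.smoothTransition.pos_of_pos ?_)).trans_le
    (le_dampingExcess_dampedTime hC ht)
  rw [← sq_abs t]
  nlinarith [abs_nonneg t]

lemma IsTestFunction.continuous_dampingExcess {g : ℝ → ℝ} (hg : IsTestFunction g) (C : ℝ) :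
    Continuous (dampingExcess C g) :=
  hg.deriv.continuous.neg.sub (continuous_const.mul hg.continuous.abs)

lemma IsTestFunction.hasCompactSupport_dampingExcess {g : ℝ → ℝ} (hg : IsTestFunction g) (C : ℝ) :
    HasCompactSupport (dampingExcess C g) :=
  hg.deriv.hasCompactSupport.neg.sub hg.hasCompactSupport.abs.mul_left

lemma exists_le_mul_of_pos_on {X : Type*} [TopologicalSpace X] {f g : X → ℝ} {K : Set X}
    (hf : ContinuousOn f K) (hg : ContinuousOn g K) (hK : IsCompact K)
    (hpos : ∀ t ∈ K, 0 < g t) : ∃ M, 0 ≤ M ∧ ∀ t ∈ K, f t ≤ M * g t := by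
  obtain ⟨M, hM⟩ := hK.exists_bound_of_continuousOn (hf.div hg fun t ht => (hpos t ht).ne')
  refine ⟨|M|, abs_nonneg _, fun t ht => ?_⟩
  rw [← div_le_iff₀ (hpos t ht)]
  exact ((le_abs_self _).trans (hM t ht)).trans (le_abs_self _)

lemma exists_le_mul_dampingExcess_add_mul {θ β : ℝ → ℝ} (hC : 0 ≤ C) (hR : 0 ≤ R)
    (hθ : Continuous θ) (hθR : ∀ t, R < |t| → θ t ≤ 0) (hβ : Continuous β) (hβ0 : ∀ t, 0 ≤ β t)
    (hβ1 : ∀ t ∈ Set.Icc (-1 : ℝ) 1, 0 < β t) :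
    ∃ M₁ M₂, 0 ≤ M₁ ∧ 0 ≤ M₂ ∧
      ∀ t, θ t ≤ M₁ * dampingExcess C (dampedTime C R) t + M₂ * β t := by
  let G := dampingExcess C (dampedTime C R)
  have hG : Continuous G := (isTestFunction_dampedTime hR).continuous_dampingExcess C
  have hK : IsCompact {t : ℝ | 1 ≤ |t| ∧ |t| ≤ R} :=
    isCompact_Icc.of_isClosed_subset ((isClosed_le continuous_const continuous_abs).inter
      (isClosed_le continuous_abs continuous_const)) fun t ht => abs_le.1 ht.2
  obtain ⟨M₁, hM₁, hθG⟩ := exists_le_mul_of_pos_on hθ.continuousOn hG.continuousOn hK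
    fun t ht => dampingExcess_dampedTime_pos hC ht.1 ht.2
  obtain ⟨M₂, hM₂, hθβ⟩ := exists_le_mul_of_pos_on (f := fun t => θ t - M₁ * G t)
    (hθ.sub (continuous_const.mul hG)).continuousOn hβ.continuousOn isCompact_Icc hβ1
  refine ⟨M₁, M₂, hM₁, hM₂, fun t => ?_⟩
  have hβt := mul_nonneg hM₂ (hβ0 t)
  rcases le_total |t| 1 with hin | hmid
  · linarith [hθβ t (abs_le.1 hin)]
  rcases le_or_gt |t| R with htR | hout
  · linarith [hθG t ⟨hmid, htR⟩]
  · exact (hθR t hout).trans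
      (add_nonneg (mul_nonneg hM₁ (dampingExcess_dampedTime_nonneg hC hmid)) hβt)

end DampedTime

section EnergyBound

variable {ι : Type*} {l : Filter ι} {Γ : ℝ → Vec4} {ρ : ι → Vec4 → ℝ} {K : ι → Vec4 → Vec4}

lemma tubeLift_dampingExcess (C : ℝ) (g : ℝ → ℝ) (p : Vec4) :
    tubeLift Γ (dampingExcess C g) p =
      -1 * (tubeLift Γ (deriv g) p + C * |tubeLift Γ g p|) := by
  simp only [tubeLift, dampingExcess, abs_mul, abs_of_nonneg (Real.smoothTransition.nonneg _)]
  ring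

lemma IsDominatedFlow.tendsto_transport_tubeLift (hK : IsDominatedFlow ρ K) (hΓ : IsTimeCurve Γ)
    (hρ : IsNegligibleOff volume l (Set.range Γ) ρ) {g : ℝ → ℝ} (hg : IsTestFunction g) :
    Tendsto (fun n => (∫ p, K n p 0 * tubeLift Γ (deriv g) p) +
      ∫ p, divergence (K n) p * tubeLift Γ g p) l (𝓝 0) := by
  have hf := hΓ.isTestFunction_tubeLift hg
  let D : Fin 4 → Vec4 → ℝ := fun a => if a = 0 then tubeLift Γ (deriv g) else 0
  have hD (a) : Continuous (D a) ∧ HasCompactSupport (D a) := by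
    simp only [D]
    split_ifs
    · exact ⟨(hΓ.isTestFunction_tubeLift hg.deriv).continuous,
        (hΓ.isTestFunction_tubeLift hg.deriv).hasCompactSupport⟩
    · exact ⟨continuous_zero, HasCompactSupport.zero⟩
  have hlim := (tendsto_finsetSum Finset.univ fun a _ => hρ.tendsto_integral_mul_zero
    (hK.isDominatedBy a) ((hf.pd a).continuous.sub (hD a).1)
    ((hf.pd a).hasCompactSupport.sub (hD a).2) (Set.forall_mem_range.2 fun t => by
      filter_upwards [hΓ.pd_tubeLift_eventuallyEq hg.differentiable a t] with p hp
      exact sub_eq_zero.2 hp)).neg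
  simp only [Finset.sum_const_zero, neg_zero] at hlim
  refine hlim.congr fun n => ?_
  have hsum : ∑ a, ∫ p, K n p a * D a p = ∫ p, K n p 0 * tubeLift Γ (deriv g) p := by
    rw [Finset.sum_eq_single 0 (fun a _ ha => by simp [D, ha]) (by simp)]
    simp [D]
  have hdiff (a) : ∫ p, K n p a * (pd a (tubeLift Γ g) - D a) p =
      (∫ p, K n p a * pd a (tubeLift Γ g) p) - ∫ p, K n p a * D a p :=
    integral_mul_sub (hK.contDiff n a).continuous (hf.pd a).continuous
      (hf.pd a).hasCompactSupport (hD a).1 (hD a).2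
  simp only [hdiff, Finset.sum_sub_distrib, hsum, sum_integral_mul_pd (hK.contDiff n) hf]
  ring

lemma IsDominatedFlow.exists_eventually_integral_dampingExcess_le
    (hK : IsDominatedFlow (fun n p => K n p 0) K) (hΓ : IsTimeCurve Γ)
    (hρ : IsNegligibleOff volume l (Set.range Γ) fun n p => K n p 0) {I : Set ℝ}
    (hI : IsCompact I) :
    ∃ C, 0 ≤ C ∧ ∀ g : ℝ → ℝ, IsTestFunction g → Function.support g ⊆ I →
      ∀ᶠ n in l, ∫ p, K n p 0 * tubeLift Γ (dampingExcess C g) p ≤ 1 := by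
  obtain ⟨c, hc, hdiv⟩ := hK.isDominatedBy_divergence.exists_bound
  obtain ⟨C, hC⟩ := (hΓ.isCompact_tube hI).exists_bound_of_continuousOn hc.continuousOn
  refine ⟨|C|, abs_nonneg C, fun g hg hgI => ?_⟩
  have hf := hΓ.isTestFunction_tubeLift hg
  have hf' := hΓ.isTestFunction_tubeLift hg.deriv
  have hsource (n) : ∫ p, divergence (K n) p * tubeLift Γ g p ≤
      |C| * ∫ p, K n p 0 * |tubeLift Γ g p| := by
    rw [← integral_const_mul]
    refine integral_mono (integrable_mul_of_hasCompactSupport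
      (hK.isDominatedBy_divergence.continuous n) hf.continuous hf.hasCompactSupport)
      ((integrable_mul_of_hasCompactSupport (hρ.continuous n) hf.continuous.abs
        hf.hasCompactSupport.abs).const_mul _) fun p => ?_
    by_cases hp : p 0 ∈ I ∧ sqOffset Γ p ≤ 2
    · have hcC : c p ≤ |C| := ((le_abs_self _).trans (hC p hp)).trans (le_abs_self C)
      calc divergence (K n) p * tubeLift Γ g p
          ≤ |divergence (K n) p| * |tubeLift Γ g p| := (le_abs_self _).trans (abs_mul _ _).le
        _ ≤ |C| * K n p 0 * |tubeLift Γ g p| := by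
            gcongr
            exact (hdiv n p).trans (mul_le_mul_of_nonneg_right hcC (hρ.nonneg n p))
        _ = |C| * (K n p 0 * |tubeLift Γ g p|) := mul_assoc _ _ _
    · simp [tubeLift_eq_zero hgI hp]
  have hlim := (hK.tendsto_transport_tubeLift hΓ hρ hg).neg.eventually_le_const
    (show -(0 : ℝ) < 1 by norm_num)
  filter_upwards [hlim] with n hn
  simp only [tubeLift_dampingExcess, mul_left_comm _ (-1 : ℝ)]
  rw [integral_const_mul, integral_mul_add_const_mul (hρ.continuous n) hf'.continuous
    hf'.hasCompactSupport hf.continuous.abs hf.hasCompactSupport.abs]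
  linarith [hsource n]

lemma IsDominatedFlow.exists_integral_tubeLift_le
    (hK : IsDominatedFlow (fun n p => K n p 0) K) (hΓ : IsTimeCurve Γ)
    (hρ : IsNegligibleOff volume l (Set.range Γ) fun n p => K n p 0) {β θ : ℝ → ℝ} {M : ℝ}
    (hβ : Continuous β) (hβc : HasCompactSupport β) (hβ0 : ∀ t, 0 ≤ β t)
    (hβ1 : ∀ t ∈ Set.Icc (-1 : ℝ) 1, 0 < β t)
    (hM : ∀ᶠ n in l, ∫ p, K n p 0 * tubeLift Γ β p ≤ M)
    (hθ : Continuous θ) (hθc : HasCompactSupport θ) :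
    ∃ M', ∀ᶠ n in l, ∫ p, K n p 0 * tubeLift Γ θ p ≤ M' := by
  obtain ⟨R, hRpos, hR⟩ := hθc.isBounded.exists_pos_norm_le
  obtain ⟨C, hC, hbound⟩ := hK.exists_eventually_integral_dampingExcess_le hΓ hρ
    (isCompact_Icc (a := -(R + 1)) (b := R + 1))
  have hg : IsTestFunction (dampedTime C R) := isTestFunction_dampedTime hRpos.le
  obtain ⟨M₁, M₂, hM₁, hM₂, hle⟩ := exists_le_mul_dampingExcess_add_mul hC hRpos.le hθ
    (fun t ht => (image_eq_zero_of_notMem_tsupport fun hmem => (hR t hmem).not_gt ht).le)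
    hβ hβ0 hβ1
  have hG := hΓ.continuous_tubeLift (hg.continuous_dampingExcess C)
  have hGc := hΓ.hasCompactSupport_tubeLift (hg.hasCompactSupport_dampingExcess C)
  have hL := hΓ.continuous_tubeLift hβ
  have hLc := hΓ.hasCompactSupport_tubeLift hβc
  have hMG : Continuous fun p => M₁ * tubeLift Γ (dampingExcess C (dampedTime C R)) p :=
    continuous_const.mul hG
  have hMGc : HasCompactSupport fun p => M₁ * tubeLift Γ (dampingExcess C (dampedTime C R)) p :=
    hGc.mul_left
  refine ⟨M₁ * 1 + M₂ * M, ?_⟩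
  filter_upwards [hbound _ hg (support_dampedTime_subset hRpos.le), hM] with n hn hMn
  calc ∫ p, K n p 0 * tubeLift Γ θ p
      ≤ ∫ p, K n p 0 * (M₁ * tubeLift Γ (dampingExcess C (dampedTime C R)) p +
          M₂ * tubeLift Γ β p) := by
        refine hρ.integral_mono (hΓ.continuous_tubeLift hθ) (hΓ.hasCompactSupport_tubeLift hθc)
          (hMG.add (continuous_const.mul hL)) (hMGc.add hLc.mul_left)
          (fun p => (tubeLift_mono hle p).trans_eq ?_) n
        simp only [tubeLift, Pi.add_apply, Pi.mul_apply]
        ring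
    _ = M₁ * (∫ p, K n p 0 * tubeLift Γ (dampingExcess C (dampedTime C R)) p) +
          M₂ * ∫ p, K n p 0 * tubeLift Γ β p := by
        rw [integral_mul_add_const_mul (hρ.continuous n) hMG hMGc hL hLc]
        simp only [mul_left_comm _ M₁, integral_const_mul]
    _ ≤ M₁ * 1 + M₂ * M := by gcongr

theorem IsDominatedFlow.concentratesOn (hK : IsDominatedFlow (fun n p => K n p 0) K)
    (hΓ : IsTimeCurve Γ) (hρ : IsNegligibleOff volume l (Set.range Γ) fun n p => K n p 0)
    {β : ℝ → ℝ} {M : ℝ} (hβ : Continuous β) (hβc : HasCompactSupport β) (hβ0 : ∀ t, 0 ≤ β t)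
    (hβ1 : ∀ t ∈ Set.Icc (-1 : ℝ) 1, 0 < β t)
    (hM : ∀ᶠ n in l, ∫ p, K n p 0 * tubeLift Γ β p ≤ M) :
    ConcentratesOn volume l (Set.range Γ) fun n p => K n p 0 := by
  refine ⟨hρ, fun f hf hfc => ?_⟩
  obtain ⟨B, hB⟩ := hfc.exists_bound_of_continuous hf
  obtain ⟨χ, hχ1, hχc, -, hχ⟩ := exists_continuousMap_one_of_isCompact_subset_isOpen
    (hfc.isCompact.image (continuous_apply (0 : Fin 4))) isOpen_univ (Set.subset_univ _)
  let θ : ℝ → ℝ := fun t => (|B| + 1) * χ t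
  have hθ : Continuous θ := continuous_const.mul χ.continuous
  have hθc : HasCompactSupport θ := HasCompactSupport.mul_left hχc
  have hL := hΓ.continuous_tubeLift hθ
  have hLc := hΓ.hasCompactSupport_tubeLift hθc
  have hL0 := tubeLift_nonneg (Γ := Γ) (φ := θ) fun t => mul_nonneg (by positivity) (hχ t).1
  let rest : Vec4 → ℝ := fun p => max (f p - tubeLift Γ θ p) 0
  have hrest : Continuous rest := (hf.sub hL).max continuous_const
  have hrestc : HasCompactSupport rest :=
    (hfc.sub hLc).comp_left (g := fun y => max y 0) (max_self 0)
  have hrest0 : ∀ p ∈ Set.range Γ, rest =ᶠ[𝓝 p] 0 := Set.forall_mem_range.2 fun t => by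
    by_cases ht : Γ t ∈ tsupport f
    · have hχt : χ t = 1 := hχ1 ⟨Γ t, ht, hΓ.time t⟩
      have hlt : f (Γ t) < tubeLift Γ θ (Γ t) := by
        rw [hΓ.tubeLift_self]
        simp only [θ, hχt, mul_one]
        linarith [(le_abs_self _).trans (hB (Γ t)), le_abs_self B]
      filter_upwards [hf.continuousAt.eventually_lt hL.continuousAt hlt] with p hp
      exact max_eq_right (sub_nonpos.2 hp.le)
    · filter_upwards [notMem_tsupport_iff_eventuallyEq.1 ht] with p hp
      exact max_eq_right (by simpa [hp] using hL0 p)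
  obtain ⟨M', hM'⟩ := hK.exists_integral_tubeLift_le hΓ hρ hβ hβc hβ0 hβ1 hM hθ hθc
  refine ⟨1 + 1 * M', ?_⟩
  filter_upwards [hM', (hρ.tendsto_integral rest hrest hrestc hrest0).eventually_le_const
    zero_lt_one] with n hn hn'
  calc ∫ p, K n p 0 * f p ≤ ∫ p, K n p 0 * (rest p + 1 * tubeLift Γ θ p) :=
        hρ.integral_mono hf hfc (hrest.add (continuous_const.mul hL)) (hrestc.add hLc.mul_left)
          (fun p => by simpa [rest] using sub_le_iff_le_add.1 (le_max_left _ _)) n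
    _ = (∫ p, K n p 0 * rest p) + 1 * ∫ p, K n p 0 * tubeLift Γ θ p :=
        integral_mul_add_const_mul (hρ.continuous n) hrest hrestc hL hLc 1
    _ ≤ 1 + 1 * M' := by linarith

end EnergyBound

/-! ### Charged matter -/

/-- A stress-energy tensor satisfying the dominant energy condition, together with a conserved
charge-current density of charge-to-mass ratio at most `κ`, subject to the Lorentz force of the
field `F`. -/
structure ChargedMatter (F : Vec4 → Mat4) (κ : ℝ) (T : Vec4 → Mat4) (J : Vec4 → Vec4) : Prop where
  smooth : SmoothMatField T
  symm : SymValued T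
  dec : ∀ p, DEC (T p)
  smooth_current : ∀ a, ContDiff ℝ (⊤ : ℕ∞) fun p => J p a
  divergence_current : ∀ p, divergence J p = 0
  divergence_stress : ∀ p a, divergence (fun q => T q a) p = ∑ b, (E * F p) a b * J p b
  ratio : ∀ p t, UnitTimelike t → |∑ a, J p a * t a| ≤ κ * ∑ a, ∑ b, T p a b * t a * t b

section TimePlane

variable {i j : Fin 4}

lemma mink_single_add_single (hi : i ≠ 0) (c s : ℝ) :
    mink (Pi.single 0 c + Pi.single i s) (Pi.single 0 c + Pi.single i s) = c ^ 2 - s ^ 2 := by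
  fin_cases i <;> simp_all [mink] <;> ring

lemma futureCausal_single_add_single (i : Fin 4) {c s : ℝ} (hs : |s| ≤ c) :
    FutureCausal (Pi.single 0 c + Pi.single i s) := by
  have hs' := abs_le.1 hs
  rcases eq_or_ne i 0 with rfl | hi
  · rw [← Pi.single_add]
    refine ⟨?_, by simpa using by linarith⟩
    simpa [mink] using mul_self_nonneg (c + s)
  · refine ⟨?_, by simpa [hi.symm] using (abs_nonneg s).trans hs⟩
    rw [mink_single_add_single hi]
    exact sub_nonneg.2 (sq_le_sq' hs'.1 hs'.2)

lemma unitTimelike_single_add_single (hi : i ≠ 0) {c s : ℝ} (hc : 0 < c) (hcs : c ^ 2 - s ^ 2 = 1) :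
    UnitTimelike (Pi.single 0 c + Pi.single i s) := by
  have hmink := (mink_single_add_single hi c s).trans hcs
  exact ⟨⟨hmink ▸ one_pos, by simpa [hi.symm] using hc⟩, hmink⟩

lemma sum_mul_single_add_single (J : Vec4) (c s : ℝ) :
    ∑ k, J k * (Pi.single 0 c + Pi.single i s : Vec4) k = c * J 0 + s * J i := by
  simp only [Pi.add_apply, mul_add, Finset.sum_add_distrib, Pi.single_apply, mul_ite, mul_zero,
    Finset.sum_ite_eq', Finset.mem_univ, if_true]
  ring

lemma sum_single_add_single_mul (T : Mat4) (c s d r : ℝ) :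
    ∑ k, ∑ l, (Pi.single 0 c + Pi.single i s : Vec4) k * T k l *
      (Pi.single 0 d + Pi.single j r : Vec4) l =
      c * d * T 0 0 + s * d * T i 0 + c * r * T 0 j + s * r * T i j := by
  calc ∑ k, ∑ l, (Pi.single 0 c + Pi.single i s : Vec4) k * T k l *
        (Pi.single 0 d + Pi.single j r : Vec4) l
      = ∑ k, (d * T k 0 + r * T k j) * (Pi.single 0 c + Pi.single i s : Vec4) k :=
        Finset.sum_congr rfl fun k _ => by rw [sum_mul_single_add_single]; ring
    _ = c * d * T 0 0 + s * d * T i 0 + c * r * T 0 j + s * r * T i j := by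
        rw [sum_mul_single_add_single]; ring

end TimePlane

namespace DEC

variable {T : Mat4}

lemma nonneg_single_add_single (h : DEC T) (i j : Fin 4) {s r : ℝ} (hs : |s| ≤ 1) (hr : |r| ≤ 1) :
    0 ≤ T 0 0 + s * T i 0 + r * T 0 j + s * r * T i j := by
  simpa only [sum_single_add_single_mul, one_mul, mul_one] using
    h _ _ (futureCausal_single_add_single i hs) (futureCausal_single_add_single j hr)

lemma zero_zero_nonneg (h : DEC T) : 0 ≤ T 0 0 := by
  simpa using h.nonneg_single_add_single 0 0 (s := 0) (r := 0) (by simp) (by simp)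

lemma abs_le (h : DEC T) (i j : Fin 4) : |T i j| ≤ T 0 0 := by
  have hpp := h.nonneg_single_add_single i j (s := 1) (r := 1) (by simp) (by simp)
  have hmm := h.nonneg_single_add_single i j (s := -1) (r := -1) (by simp) (by simp)
  have hpm := h.nonneg_single_add_single i j (s := 1) (r := -1) (by simp) (by simp)
  have hmp := h.nonneg_single_add_single i j (s := -1) (r := 1) (by simp) (by simp)
  exact _root_.abs_le.2 ⟨by linarith, by linarith⟩

end DEC

namespace ChargedMatter

section Pointwise

variable {F : Vec4 → Mat4} {κ : ℝ} {T : Vec4 → Mat4} {J : Vec4 → Vec4}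

lemma abs_le (h : ChargedMatter F κ T J) (p : Vec4) (i j : Fin 4) : |T p i j| ≤ T p 0 0 :=
  (h.dec p).abs_le i j

lemma energy_nonneg (h : ChargedMatter F κ T J) (p : Vec4) : 0 ≤ T p 0 0 :=
  (h.dec p).zero_zero_nonneg

lemma apply_comm (h : ChargedMatter F κ T J) (p : Vec4) (i j : Fin 4) : T p i j = T p j i :=
  congrFun (congrFun (h.symm p).symm i) j

protected lemma continuous (h : ChargedMatter F κ T J) (i j : Fin 4) :
    Continuous fun p => T p i j :=
  (h.smooth i j).continuous

lemma continuous_current (h : ChargedMatter F κ T J) (i : Fin 4) : Continuous fun p => J p i :=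
  (h.smooth_current i).continuous

lemma abs_current_add_le (h : ChargedMatter F κ T J) (hκ : 0 ≤ κ) {i : Fin 4} (hi : i ≠ 0)
    {c s : ℝ} (hc : 0 < c) (hcs : c ^ 2 - s ^ 2 = 1) (p : Vec4) :
    |c * J p 0 + s * J p i| ≤ (c + |s|) ^ 2 * (κ * T p 0 0) := by
  have hratio := h.ratio p _ (unitTimelike_single_add_single hi hc hcs)
  simp only [mul_comm (T p _ _)] at hratio
  rw [sum_mul_single_add_single, sum_single_add_single_mul] at hratio
  have hentry (u : ℝ) (k l) : u * T p k l ≤ |u| * T p 0 0 :=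
    (le_abs_self _).trans (abs_mul u _ ▸ mul_le_mul_of_nonneg_left (h.abs_le p k l) (abs_nonneg u))
  refine hratio.trans ?_
  rw [mul_left_comm]
  refine mul_le_mul_of_nonneg_left ?_ hκ
  calc c * c * T p 0 0 + s * c * T p i 0 + c * s * T p 0 i + s * s * T p i i
      ≤ c * c * T p 0 0 + |s * c| * T p 0 0 + |c * s| * T p 0 0 + |s * s| * T p 0 0 := by
        linarith [hentry (s * c) i 0, hentry (c * s) 0 i, hentry (s * s) i i]
    _ = (c + |s|) ^ 2 * T p 0 0 := by simp only [abs_mul, abs_of_pos hc]; ring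

lemma abs_current_le (h : ChargedMatter F κ T J) (hκ : 0 ≤ κ) (p : Vec4) (i : Fin 4) :
    |J p i| ≤ 6 * κ * T p 0 0 := by
  have hκT : 0 ≤ κ * T p 0 0 := mul_nonneg hκ (h.energy_nonneg p)
  -- `(5/4)² - (3/4)² = 1` and `(5/4 + 3/4)² = 4`
  have hboost {j : Fin 4} (hj : j ≠ 0) {s : ℝ} (hs : |s| = 3 / 4) :
      |5 / 4 * J p 0 + s * J p j| ≤ 4 * (κ * T p 0 0) := by
    refine (h.abs_current_add_le hκ hj (by norm_num) ?_ p).trans_eq ?_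
    · rw [← sq_abs s, hs]; norm_num
    · rw [hs]; norm_num
  have hpair {j : Fin 4} (hj : j ≠ 0) : |J p 0| ≤ 6 * κ * T p 0 0 ∧ |J p j| ≤ 6 * κ * T p 0 0 := by
    have hpos := _root_.abs_le.1 (hboost hj (s := 3 / 4) (by norm_num))
    have hneg := _root_.abs_le.1 (hboost hj (s := -(3 / 4)) (by norm_num))
    constructor <;> exact _root_.abs_le.2 ⟨by linarith, by linarith⟩
  rcases eq_or_ne i 0 with rfl | hi
  exacts [(hpair one_ne_zero).1, (hpair hi).2]

lemma smul (h : ChargedMatter F κ T J) {c : ℝ} (hc : 0 ≤ c) :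
    ChargedMatter F κ (fun p => c • T p) (fun p => c • J p) where
  smooth a b := contDiff_const.mul (h.smooth a b)
  symm p := by rw [Matrix.transpose_smul, h.symm p]
  dec p ξ ζ hξ hζ := by
    simpa only [Finset.mul_sum, Matrix.smul_apply, smul_eq_mul, mul_left_comm c, mul_assoc]
      using mul_nonneg hc (h.dec p ξ ζ hξ hζ)
  smooth_current a := contDiff_const.mul (h.smooth_current a)
  divergence_current p := by
    have hdiv := congrArg (c * ·) (h.divergence_current p)
    simpa only [divergence, Pi.smul_apply, smul_eq_mul, Finset.mul_sum, mul_zero,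
      pd_const_mul ((h.smooth_current _).differentiable (by simp))] using hdiv
  divergence_stress p a := by
    have hdiv := congrArg (c * ·) (h.divergence_stress p a)
    simpa only [divergence, Matrix.smul_apply, Pi.smul_apply, smul_eq_mul, Finset.mul_sum,
      mul_left_comm c, pd_const_mul ((h.smooth _ _).differentiable (by simp))] using hdiv
  ratio p t ht := by
    have hratio := mul_le_mul_of_nonneg_left (h.ratio p t ht) hc
    rw [← abs_of_nonneg hc, ← abs_mul, abs_of_nonneg hc, mul_left_comm] at hratio
    simpa only [Finset.mul_sum, Pi.smul_apply, Matrix.smul_apply, smul_eq_mul, mul_assoc]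
      using hratio

end Pointwise

section Family

variable {ι : Type*} {F : Vec4 → Mat4} {κ : ℝ} {T : ι → Vec4 → Mat4} {J : ι → Vec4 → Vec4}

lemma isDominatedBy_stress (h : ∀ n, ChargedMatter F κ (T n) (J n)) (i j : Fin 4) :
    IsDominatedBy (fun n p => T n p i j) fun n p => T n p 0 0 :=
  .of_abs_le (fun n => (h n).continuous i j) 1 fun n p => by simpa using (h n).abs_le p i j

lemma isDominatedBy_current (h : ∀ n, ChargedMatter F κ (T n) (J n)) (hκ : 0 ≤ κ) (i : Fin 4) :
    IsDominatedBy (fun n p => J n p i) fun n p => T n p 0 0 :=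
  .of_abs_le (fun n => (h n).continuous_current i) (6 * κ) fun n p => (h n).abs_current_le hκ p i

lemma isDominatedFlow_current (h : ∀ n, ChargedMatter F κ (T n) (J n)) (hκ : 0 ≤ κ) :
    IsDominatedFlow (fun n p => T n p 0 0) J where
  contDiff n := (h n).smooth_current
  isDominatedBy := isDominatedBy_current h hκ
  isDominatedBy_divergence := by
    refine .of_abs_le (fun n => ?_) 0 fun n p => by simp [(h n).divergence_current p]
    simpa only [funext (h n).divergence_current] using continuous_const

lemma isDominatedFlow_stress (h : ∀ n, ChargedMatter F κ (T n) (J n)) (hκ : 0 ≤ κ)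
    (hF : ∀ a b, Continuous fun p => (E * F p) a b) (i : Fin 4) :
    IsDominatedFlow (fun n p => T n p 0 0) fun n p => T n p i where
  contDiff n := (h n).smooth i
  isDominatedBy := isDominatedBy_stress h i
  isDominatedBy_divergence := by
    simpa only [funext fun n => funext fun p => (h n).divergence_stress p i] using
      IsDominatedBy.sum fun b => (isDominatedBy_current h hκ b).mul_left (hF i b)

end Family

end ChargedMatter

/-! ### Conservation of mass and charge -/

/-- `W` is the Lorentz factor of the curve `Γ`, so that `W t • deriv Γ t` is its four-velocity. -/
structure IsLorentzFactor (Γ : ℝ → Vec4) (W : ℝ → ℝ) : Prop where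
  contDiff : ContDiff ℝ (⊤ : ℕ∞) W
  pos : ∀ t, 0 < W t
  sq_mul_mink : ∀ t, W t ^ 2 * mink (deriv Γ t) (deriv Γ t) = 1

/-- The four-velocity of a curve `Γ` with Lorentz factor `W`, with its index lowered. -/
def covelocity (Γ : ℝ → Vec4) (W : ℝ → ℝ) (t : ℝ) : Vec4 := fun a => E a a * (W t * deriv Γ t a)

lemma E_mul_self (a : Fin 4) : E a a * E a a = 1 := by fin_cases a <;> simp [E]

lemma E_mul_apply (A : Mat4) (a b : Fin 4) : (E * A) a b = E a a * A a b := by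
  rw [E, Matrix.diagonal_mul, Matrix.diagonal_apply_eq]

lemma mink_eq_sum (x y : Vec4) : mink x y = ∑ a, E a a * x a * y a := by
  simp only [mink, E, Fin.sum_univ_four, Matrix.diagonal_apply_eq, Matrix.cons_val]
  ring

lemma sum_mul_mul_eq_zero_of_transpose_eq_neg {A : Mat4} (hA : Aᵀ = -A) (v : Vec4) :
    ∑ a, ∑ b, v a * A a b * v b = 0 := by
  have hneg : ∑ a, ∑ b, v a * A a b * v b = -∑ a, ∑ b, v a * A a b * v b := by
    conv_lhs => rw [Finset.sum_comm]
    simp only [← Finset.sum_neg_distrib]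
    refine Finset.sum_congr rfl fun a _ => Finset.sum_congr rfl fun b _ => ?_
    have hab : A b a = -A a b := congrFun (congrFun hA a) b
    linear_combination v a * v b * hab
  linarith

section Covelocity

variable (Γ : ℝ → Vec4) (W : ℝ → ℝ)

lemma E_mul_covelocity (a : Fin 4) (t : ℝ) : E a a * covelocity Γ W t a = W t * deriv Γ t a := by
  rw [covelocity, ← mul_assoc, E_mul_self, one_mul]

lemma sum_deriv_mul_sum_covelocity_mul {A : Mat4} (hA : Aᵀ = -A) (t : ℝ) :
    ∑ b, deriv Γ t b * ∑ a, covelocity Γ W t a * (E * A) a b = 0 := by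
  have hv := sum_mul_mul_eq_zero_of_transpose_eq_neg hA (deriv Γ t)
  rw [Finset.sum_comm] at hv
  rw [← mul_zero (W t), ← hv, Finset.mul_sum]
  refine Finset.sum_congr rfl fun b _ => ?_
  rw [Finset.mul_sum, Finset.mul_sum]
  refine Finset.sum_congr rfl fun a _ => ?_
  rw [E_mul_apply]
  linear_combination deriv Γ t b * A a b * E_mul_covelocity Γ W a t

end Covelocity

namespace IsLorentzFactor

variable {Γ : ℝ → Vec4} {W : ℝ → ℝ}

lemma ne_zero (hW : IsLorentzFactor Γ W) (t : ℝ) : W t ≠ 0 := (hW.pos t).ne'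

lemma contDiff_time (hW : IsLorentzFactor Γ W) : ContDiff ℝ (⊤ : ℕ∞) fun p : Vec4 => W (p 0) :=
  hW.contDiff.comp (contDiff_apply ℝ ℝ 0)

lemma contDiff_covelocity (hW : IsLorentzFactor Γ W) (hΓ : IsTimeCurve Γ) (a : Fin 4) :
    ContDiff ℝ (⊤ : ℕ∞) fun t => covelocity Γ W t a :=
  contDiff_const.mul (hW.contDiff.mul (hΓ.contDiff_deriv_coord a))

lemma sum_deriv_mul_covelocity (hW : IsLorentzFactor Γ W) (t : ℝ) :
    ∑ a, deriv Γ t a * covelocity Γ W t a = 1 / W t := by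
  rw [eq_div_iff (hW.ne_zero t), ← hW.sq_mul_mink t, mink_eq_sum, Finset.sum_mul, Finset.mul_sum]
  exact Finset.sum_congr rfl fun a _ => by rw [covelocity]; ring

lemma mink_covelocity (hW : IsLorentzFactor Γ W) (t : ℝ) :
    mink (covelocity Γ W t) (covelocity Γ W t) = 1 := by
  simp only [mink_eq_sum, E_mul_covelocity, mul_assoc, ← Finset.mul_sum]
  rw [hW.sum_deriv_mul_covelocity, mul_one_div_cancel (hW.ne_zero t)]

lemma unitTimelike_covelocity (hW : IsLorentzFactor Γ W) (hΓ : IsTimeCurve Γ) (t : ℝ) :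
    UnitTimelike (covelocity Γ W t) := by
  refine ⟨⟨hW.mink_covelocity t ▸ one_pos, ?_⟩, hW.mink_covelocity t⟩
  simp [covelocity, E, hΓ.deriv_zero, hW.pos]

lemma sum_deriv_mul_deriv_covelocity (hW : IsLorentzFactor Γ W) (hΓ : IsTimeCurve Γ) (t : ℝ) :
    ∑ a, deriv Γ t a * deriv (fun s => covelocity Γ W s a) t = 0 := by
  have hw (a) :
      HasDerivAt (fun s => covelocity Γ W s a) (deriv (fun s => covelocity Γ W s a) t) t :=
    ((hW.contDiff_covelocity hΓ a).differentiable (by simp) t).hasDerivAt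
  have hsq := HasDerivAt.fun_sum (u := Finset.univ) fun a _ =>
    ((hw a).const_mul (E a a)).fun_mul (hw a)
  simp only [← mink_eq_sum, hW.mink_covelocity] at hsq
  have hzero := hsq.unique (hasDerivAt_const t 1)
  have htwo : 2 * W t * ∑ a, deriv Γ t a * deriv (fun s => covelocity Γ W s a) t = 0 := by
    rw [← hzero, Finset.mul_sum]
    refine Finset.sum_congr rfl fun a _ => ?_
    linear_combination -2 * deriv (fun s => covelocity Γ W s a) t * E_mul_covelocity Γ W a t
  simpa [hW.ne_zero t] using htwo

end IsLorentzFactor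

namespace ChargedMatter

variable {ι : Type*} {l : Filter ι} {Γ : ℝ → Vec4} {W : ℝ → ℝ} {F : Vec4 → Mat4} {κ : ℝ}
  {T : ι → Vec4 → Mat4} {J : ι → Vec4 → Vec4} {f g : Vec4 → ℝ}

lemma asymptoticallyConserved_current (h : ∀ n, ChargedMatter F κ (T n) (J n)) (hκ : 0 ≤ κ)
    (hΓ : IsTimeCurve Γ) (hρ : ConcentratesOn volume l (Set.range Γ) fun n p => T n p 0 0) :
    AsymptoticallyConserved Γ l fun n p => J n p 0 := fun f g hf hg hfg => by
  simpa [(h _).divergence_current] using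
    (isDominatedFlow_current h hκ).tendsto_transport hΓ hρ hf hg hfg

lemma tendsto_work (h : ∀ n, ChargedMatter F κ (T n) (J n)) (hκ : 0 ≤ κ) (hΓ : IsTimeCurve Γ)
    (hW : IsLorentzFactor Γ W) (hρ : ConcentratesOn volume l (Set.range Γ) fun n p => T n p 0 0)
    (hF : ∀ a b, ContDiff ℝ (⊤ : ℕ∞) fun p => (E * F p) a b) (hFa : ∀ p, (F p)ᵀ = -F p)
    (hf : IsTestFunction f) :
    Tendsto (fun n => ∑ a, ∫ p, divergence (fun q => T n q a) p * (covelocity Γ W (p 0) a * f p))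
      l (𝓝 0) := by
  have hw (a) : ContDiff ℝ (⊤ : ℕ∞) fun p : Vec4 => covelocity Γ W (p 0) a :=
    (hW.contDiff_covelocity hΓ a).comp (contDiff_apply ℝ ℝ 0)
  have hα (b a) : IsTestFunction fun p => (covelocity Γ W (p 0) a * (E * F p) a b) * f p :=
    hf.mul_left ((hw a).mul (hF a b))
  have hlim := (isDominatedFlow_current h hκ).tendsto_transverse_sum hΓ hρ
    fun b => IsTestFunction.sum (hα b)
  have horth (p : Vec4) : ∑ b, deriv Γ (p 0) b * ∑ a, covelocity Γ W (p 0) a * (E * F p) a b * f p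
      = 0 := by
    simp only [← Finset.sum_mul, ← mul_assoc]
    rw [sum_deriv_mul_sum_covelocity_mul Γ W (hFa p), zero_mul]
  simp only [horth, mul_zero, integral_zero, sub_zero] at hlim
  refine hlim.congr fun n => ?_
  have hinteg (a b) := integrable_mul_of_hasCompactSupport (μ := volume)
    ((h n).continuous_current b) (hα b a).continuous (hα b a).hasCompactSupport
  simp only [Finset.mul_sum, (h n).divergence_stress, Finset.sum_mul]
  simp only [integral_finsetSum _ fun a _ => hinteg a _]
  rw [Finset.sum_comm]
  refine Finset.sum_congr rfl fun a _ => ?_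
  rw [← integral_finsetSum _ fun b _ => hinteg a b]
  exact integral_congr_ae (.of_forall fun p => Finset.sum_congr rfl fun b _ => by ring)

lemma asymptoticallyConserved_mass (h : ∀ n, ChargedMatter F κ (T n) (J n)) (hκ : 0 ≤ κ)
    (hΓ : IsTimeCurve Γ) (hW : IsLorentzFactor Γ W)
    (hρ : ConcentratesOn volume l (Set.range Γ) fun n p => T n p 0 0)
    (hF : ∀ a b, ContDiff ℝ (⊤ : ℕ∞) fun p => (E * F p) a b) (hFa : ∀ p, (F p)ᵀ = -F p) :
    AsymptoticallyConserved Γ l fun n p => T n p 0 0 / W (p 0) := fun f g hf hg hfg => by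
  have hrow (a) := isDominatedFlow_stress h hκ (fun a b => (hF a b).continuous) a
  have hw (a) : ContDiff ℝ (⊤ : ℕ∞) fun p : Vec4 => covelocity Γ W (p 0) a :=
    (hW.contDiff_covelocity hΓ a).comp (contDiff_apply ℝ ℝ 0)
  have hw' (a) : ContDiff ℝ (⊤ : ℕ∞) fun p : Vec4 => deriv (fun s => covelocity Γ W s a) (p 0) :=
    (contDiff_infty_iff_deriv.1 (hW.contDiff_covelocity hΓ a)).2.comp (contDiff_apply ℝ ℝ 0)
  let G (a : Fin 4) (p : Vec4) : ℝ :=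
    deriv (fun s => covelocity Γ W s a) (p 0) * f p + covelocity Γ W (p 0) a * g p
  have hG (a) : IsTestFunction (G a) := (hf.mul_left (hw' a)).add (hg.mul_left (hw a))
  have htransport (a) := (hrow a).tendsto_transport hΓ hρ (hf.mul_left (hw a)) (hG a) fun t => by
    simp only [G, hΓ.time]
    exact ((hW.contDiff_covelocity hΓ a).differentiable (by simp) t).hasDerivAt.fun_mul (hfg t)
  have hG_deriv (p : Vec4) : ∑ a, deriv Γ (p 0) a * G a p = g p / W (p 0) := by
    simp only [G, mul_add, ← mul_assoc, Finset.sum_add_distrib, ← Finset.sum_mul]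
    rw [hW.sum_deriv_mul_deriv_covelocity hΓ, hW.sum_deriv_mul_covelocity]
    ring
  have hlim := (tendsto_finsetSum Finset.univ fun a _ => htransport a).sub
    (((hrow 0).tendsto_transverse_sum hΓ hρ hG).add (tendsto_work h hκ hΓ hW hρ hF hFa hf))
  simp only [Finset.sum_const_zero, add_zero, sub_zero] at hlim
  refine hlim.congr fun n => ?_
  simp only [hG_deriv, (h n).apply_comm _ _ 0, Finset.sum_add_distrib, div_mul_eq_mul_div, mul_div]
  ring

end ChargedMatter

/-! ### Limits of concentrating charged matter -/

namespace IsLorentzFactor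

variable {Γ : ℝ → Vec4} {W : ℝ → ℝ}

lemma sum_deriv_mul_covelocity_mul (hW : IsLorentzFactor Γ W) (t c : ℝ) :
    ∑ a, deriv Γ t a * (covelocity Γ W t a * c) = c / W t := by
  simp only [← mul_assoc, ← Finset.sum_mul]
  rw [hW.sum_deriv_mul_covelocity, one_div_mul_eq_div]

lemma sum_sum_deriv_mul_covelocity_mul (hW : IsLorentzFactor Γ W) (t c : ℝ) :
    ∑ i, ∑ j, deriv Γ t i * deriv Γ t j * (covelocity Γ W t i * (covelocity Γ W t j * c)) =
      c / W t ^ 2 := by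
  calc _ = ∑ i, deriv Γ t i * (covelocity Γ W t i *
          ∑ j, deriv Γ t j * (covelocity Γ W t j * c)) := by
        refine Finset.sum_congr rfl fun i _ => ?_
        simp only [Finset.mul_sum]
        exact Finset.sum_congr rfl fun j _ => by ring
    _ = c / W t ^ 2 := by
        rw [hW.sum_deriv_mul_covelocity_mul, hW.sum_deriv_mul_covelocity_mul, div_div, sq]

lemma isTestFunction_div (hW : IsLorentzFactor Γ W) {φ : ℝ → ℝ} (hφ : IsTestFunction φ) :
    IsTestFunction fun t => φ t / W t := by
  simp only [div_eq_inv_mul]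
  exact hφ.mul_left (hW.contDiff.inv hW.ne_zero)

lemma timeBump_div_nonneg (hW : IsLorentzFactor Γ W) (t : ℝ) : 0 ≤ timeBump t / W t :=
  div_nonneg (timeBump_nonneg t) (hW.pos t).le

lemma timeBump_div_pos (hW : IsLorentzFactor Γ W) {t : ℝ} (ht : t ∈ Set.Icc (-1 : ℝ) 1) :
    0 < timeBump t / W t :=
  div_pos (timeBump_pos ht) (hW.pos t)

lemma integral_timeBump_div_pos (hW : IsLorentzFactor Γ W) : 0 < ∫ t, timeBump t / W t := by
  have hβ := hW.isTestFunction_div isTestFunction_timeBump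
  exact hβ.continuous.integral_pos_of_hasCompactSupport_nonneg_nonzero hβ.hasCompactSupport
    hW.timeBump_div_nonneg (hW.timeBump_div_pos (t := 0) (by norm_num)).ne'

end IsLorentzFactor

namespace ChargedMatter

variable {ι : Type*} {l : Filter ι} {Γ : ℝ → Vec4} {W : ℝ → ℝ} {F : Vec4 → Mat4} {κ q : ℝ}
  {T : ι → Vec4 → Mat4} {J : ι → Vec4 → Vec4} {f : Vec4 → ℝ} {x : Vec4 → Mat4} {α : Vec4 → Vec4}

lemma integral_minner {T : Vec4 → Mat4} {J : Vec4 → Vec4} (h : ChargedMatter F κ T J)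
    (hx : ∀ i j, IsTestFunction fun p => x p i j) :
    ∫ p, minner (T p) (x p) = ∑ i, ∑ j, ∫ p, T p i j * x p i j := by
  have hinteg (i j) := integrable_mul_of_hasCompactSupport (μ := volume) (h.continuous i j)
    (hx i j).continuous (hx i j).hasCompactSupport
  simp only [minner]
  rw [integral_finsetSum _ fun i _ => integrable_finsetSum _ fun j _ => hinteg i j]
  exact Finset.sum_congr rfl fun i _ => integral_finsetSum _ fun j _ => hinteg i j

lemma integral_current {T : Vec4 → Mat4} {J : Vec4 → Vec4} (h : ChargedMatter F κ T J)
    (hα : ∀ a, IsTestFunction fun p => α p a) :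
    ∫ p, ∑ a, J p a * α p a = ∑ a, ∫ p, J p a * α p a :=
  integral_finsetSum _ fun a _ => integrable_mul_of_hasCompactSupport (h.continuous_current a)
    (hα a).continuous (hα a).hasCompactSupport

lemma tendsto_energy (h : ∀ n, ChargedMatter F κ (T n) (J n)) (hκ : 0 ≤ κ)
    (hΓ : IsTimeCurve Γ) (hW : IsLorentzFactor Γ W)
    (hρ : ConcentratesOn volume l (Set.range Γ) fun n p => T n p 0 0)
    (hF : ∀ a b, ContDiff ℝ (⊤ : ℕ∞) fun p => (E * F p) a b) (hFa : ∀ p, (F p)ᵀ = -F p)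
    (hmass : ∀ n, ∫ p, T n p 0 0 / W (p 0) * tubeLift Γ timeBump p = 1) (hf : IsTestFunction f) :
    Tendsto (fun n => ∫ p, T n p 0 0 * f p) l (𝓝 (∫ t, W t * f (Γ t))) := by
  have hlim := (asymptoticallyConserved_mass h hκ hΓ hW hρ hF hFa).tendsto_sub
    (fun n => ((h n).continuous 0 0).div hW.contDiff_time.continuous fun p => hW.ne_zero _) hΓ
    (hf.mul_left hW.contDiff_time)
  simp only [hmass, mul_one, hΓ.time, ← mul_assoc, div_mul_cancel₀ _ (hW.ne_zero _)] at hlim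
  exact tendsto_sub_nhds_zero_iff.1 hlim

lemma tendsto_stress (h : ∀ n, ChargedMatter F κ (T n) (J n)) (hκ : 0 ≤ κ) (hΓ : IsTimeCurve Γ)
    (hρ : ConcentratesOn volume l (Set.range Γ) fun n p => T n p 0 0)
    (hF : ∀ a b, Continuous fun p => (E * F p) a b)
    (henergy : ∀ f, IsTestFunction f →
      Tendsto (fun n => ∫ p, T n p 0 0 * f p) l (𝓝 (∫ t, W t * f (Γ t))))
    (hx : ∀ i j, IsTestFunction fun p => x p i j) :
    Tendsto (fun n => ∫ p, minner (T n p) (x p)) l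
      (𝓝 (∫ t, W t * ∑ i, ∑ j, deriv Γ t i * deriv Γ t j * x (Γ t) i j)) := by
  have hrow := isDominatedFlow_stress h hκ hF
  let y (i : Fin 4) (p : Vec4) : ℝ := ∑ j, deriv Γ (p 0) j * x p i j
  have hy (i) : IsTestFunction (y i) :=
    IsTestFunction.sum fun j => (hx i j).mul_left (hΓ.contDiff_deriv_time j)
  have hlim := ((tendsto_finsetSum Finset.univ fun i _ =>
    (hrow i).tendsto_transverse_sum hΓ hρ (hx i)).add
      ((hrow 0).tendsto_transverse_sum hΓ hρ hy)).add
    (henergy _ (IsTestFunction.sum fun i => (hy i).mul_left (hΓ.contDiff_deriv_time i)))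
  have hlimit (t) : ∑ i, deriv Γ (Γ t 0) i * y i (Γ t) =
      ∑ i, ∑ j, deriv Γ t i * deriv Γ t j * x (Γ t) i j := by
    simp only [y, hΓ.time, Finset.mul_sum, mul_assoc]
  simp only [hlimit, Finset.sum_const_zero, zero_add] at hlim
  refine hlim.congr fun n => ?_
  simp only [(h n).integral_minner hx, Finset.sum_sub_distrib, (h n).apply_comm _ _ 0, y]
  ring

lemma tendsto_current (h : ∀ n, ChargedMatter F κ (T n) (J n)) (hκ : 0 ≤ κ) (hΓ : IsTimeCurve Γ)
    (hρ : ConcentratesOn volume l (Set.range Γ) fun n p => T n p 0 0)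
    (hq : Tendsto (fun n => ∫ p, J n p 0 * tubeLift Γ timeBump p) l (𝓝 q))
    (hα : ∀ a, IsTestFunction fun p => α p a) :
    Tendsto (fun n => ∫ p, ∑ a, J n p a * α p a) l
      (𝓝 (q * ∫ t, ∑ a, deriv Γ t a * α (Γ t) a)) := by
  have hlim := (((isDominatedFlow_current h hκ).tendsto_transverse_sum hΓ hρ hα).add
    ((asymptoticallyConserved_current h hκ hΓ hρ).tendsto_sub
      (fun n => (h n).continuous_current 0) hΓ
      (IsTestFunction.sum fun a => (hα a).mul_left (hΓ.contDiff_deriv_time a)))).add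
    (hq.mul_const (∫ t, ∑ a, deriv Γ t a * α (Γ t) a))
  simp only [hΓ.time, zero_add] at hlim
  refine hlim.congr fun n => ?_
  rw [(h n).integral_current hα]
  ring

lemma abs_integral_current_le {T : Vec4 → Mat4} {J : Vec4 → Vec4} (h : ChargedMatter F κ T J)
    {u : Vec4 → Vec4} (hu : ∀ a, ContDiff ℝ (⊤ : ℕ∞) fun p => u p a)
    (hunit : ∀ p, UnitTimelike (u p)) (hf : IsTestFunction f) (hf0 : ∀ p, 0 ≤ f p) :
    |∫ p, ∑ a, J p a * (u p a * f p)| ≤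
      κ * ∫ p, minner (T p) (Matrix.of fun i j => u p i * (u p j * f p)) := by
  rw [← integral_const_mul, ← Real.norm_eq_abs]
  refine norm_integral_le_of_norm_le (.const_mul (integrable_finsetSum _ fun i _ =>
    integrable_finsetSum _ fun j _ => ?_) κ) (.of_forall fun p => ?_)
  · have hij := (hf.mul_left (hu j)).mul_left (hu i)
    exact integrable_mul_of_hasCompactSupport (h.continuous i j) hij.continuous
      hij.hasCompactSupport
  · calc ‖∑ a, J p a * (u p a * f p)‖ = |∑ a, J p a * u p a| * f p := by
          simp only [← mul_assoc, ← Finset.sum_mul]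
          rw [Real.norm_eq_abs, abs_mul, abs_of_nonneg (hf0 p)]
      _ ≤ (κ * ∑ i, ∑ j, T p i j * u p i * u p j) * f p :=
          mul_le_mul_of_nonneg_right (h.ratio p _ (hunit p)) (hf0 p)
      _ = κ * minner (T p) (Matrix.of fun i j => u p i * (u p j * f p)) := by
          simp only [minner, Matrix.of_apply, mul_assoc, Finset.sum_mul]

lemma abs_charge_le [l.NeBot] (h : ∀ n, ChargedMatter F κ (T n) (J n)) (hΓ : IsTimeCurve Γ)
    (hW : IsLorentzFactor Γ W)
    (hstress : ∀ x : Vec4 → Mat4, (∀ i j, IsTestFunction fun p => x p i j) →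
      Tendsto (fun n => ∫ p, minner (T n p) (x p)) l
        (𝓝 (∫ t, W t * ∑ i, ∑ j, deriv Γ t i * deriv Γ t j * x (Γ t) i j)))
    (hcurrent : ∀ α : Vec4 → Vec4, (∀ a, IsTestFunction fun p => α p a) →
      Tendsto (fun n => ∫ p, ∑ a, J n p a * α p a) l
        (𝓝 (q * ∫ t, ∑ a, deriv Γ t a * α (Γ t) a))) :
    |q| ≤ κ := by
  have hw (a) : ContDiff ℝ (⊤ : ℕ∞) fun p : Vec4 => covelocity Γ W (p 0) a :=
    (hW.contDiff_covelocity hΓ a).comp (contDiff_apply ℝ ℝ 0)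
  have hL := hΓ.isTestFunction_tubeLift isTestFunction_timeBump
  have hJ := hcurrent (fun p a => covelocity Γ W (p 0) a * tubeLift Γ timeBump p)
    fun a => hL.mul_left (hw a)
  have hT := hstress (fun p => Matrix.of fun i j =>
    covelocity Γ W (p 0) i * (covelocity Γ W (p 0) j * tubeLift Γ timeBump p))
    fun i j => (hL.mul_left (hw j)).mul_left (hw i)
  have hW_mul (t) : W t * (timeBump t / W t ^ 2) = timeBump t / W t := by
    field_simp [hW.ne_zero t]
  simp only [Matrix.of_apply, hΓ.time, hΓ.tubeLift_self, hW.sum_deriv_mul_covelocity_mul,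
    hW.sum_sum_deriv_mul_covelocity_mul, hW_mul] at hJ hT
  have hpos := hW.integral_timeBump_div_pos
  have hle := le_of_tendsto_of_tendsto' hJ.abs (hT.const_mul κ) fun n =>
    (h n).abs_integral_current_le hw (fun p => hW.unitTimelike_covelocity hΓ (p 0)) hL
      (tubeLift_nonneg timeBump_nonneg)
  rw [abs_mul, abs_of_pos hpos] at hle
  exact le_of_mul_le_mul_right hle hpos

lemma exists_subseq_tendsto_charge {T : ℕ → Vec4 → Mat4} {J : ℕ → Vec4 → Vec4}
    (h : ∀ n, ChargedMatter F κ (T n) (J n)) (hκ : 0 ≤ κ)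
    (hρ : ConcentratesOn volume atTop (Set.range Γ) fun n p => T n p 0 0)
    (hf : IsTestFunction f) :
    ∃ q, ∃ σ : ℕ → ℕ, StrictMono σ ∧ Tendsto (fun n => ∫ p, J (σ n) p 0 * f p) atTop (𝓝 q) := by
  obtain ⟨M, hM⟩ := hρ.exists_abs_integral_mul_le (isDominatedBy_current h hκ 0) hf.continuous
    hf.hasCompactSupport
  obtain ⟨q, -, σ, hσ, hlim⟩ := tendsto_subseq_of_frequently_bounded
    (Metric.isBounded_closedBall (x := (0 : ℝ)) (r := M))
    (hM.mono fun n hn => mem_closedBall_zero_iff.2 hn).frequently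
  exact ⟨q, σ, hσ, hlim⟩

theorem exists_subseq_tendsto {T : ℕ → Vec4 → Mat4} {J : ℕ → Vec4 → Vec4}
    (h : ∀ n, ChargedMatter F κ (T n) (J n)) (hκ : 0 ≤ κ) (hΓ : IsTimeCurve Γ)
    (hW : IsLorentzFactor Γ W)
    (hρ : ConcentratesOn volume atTop (Set.range Γ) fun n p => T n p 0 0)
    (hF : ∀ a b, ContDiff ℝ (⊤ : ℕ∞) fun p => (E * F p) a b) (hFa : ∀ p, (F p)ᵀ = -F p)
    (hmass : ∀ n, ∫ p, T n p 0 0 / W (p 0) * tubeLift Γ timeBump p = 1) :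
    ∃ q, |q| ≤ κ ∧ ∃ σ : ℕ → ℕ, StrictMono σ ∧
      (∀ x : Vec4 → Mat4, (∀ i j, IsTestFunction fun p => x p i j) →
        Tendsto (fun n => ∫ p, minner (T (σ n) p) (x p)) atTop
          (𝓝 (∫ t, W t * ∑ i, ∑ j, deriv Γ t i * deriv Γ t j * x (Γ t) i j))) ∧
      ∀ α : Vec4 → Vec4, (∀ a, IsTestFunction fun p => α p a) →
        Tendsto (fun n => ∫ p, ∑ a, J (σ n) p a * α p a) atTop
          (𝓝 (q * ∫ t, ∑ a, deriv Γ t a * α (Γ t) a)) := by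
  obtain ⟨q, σ, hσ, hq⟩ :=
    exists_subseq_tendsto_charge h hκ hρ (hΓ.isTestFunction_tubeLift isTestFunction_timeBump)
  have hρσ := hρ.comp_tendsto hσ.tendsto_atTop
  have hstress := fun x => tendsto_stress (x := x) (fun n => h (σ n)) hκ hΓ hρσ
    (fun a b => (hF a b).continuous) fun f hf =>
      tendsto_energy (fun n => h (σ n)) hκ hΓ hW hρσ hF hFa (fun n => hmass (σ n)) hf
  have hcurrent := fun α => tendsto_current (α := α) (fun n => h (σ n)) hκ hΓ hρσ hq
  exact ⟨q, abs_charge_le (fun n => h (σ n)) hΓ hW hstress hcurrent, σ, hσ, hstress, hcurrent⟩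

end ChargedMatter

/-! ### The dual cone -/

lemma zero_mem_coneD : (0 : Mat4) ∈ coneD :=
  ⟨0, 0, 0, fun k => k.elim0, fun k => k.elim0, by simp⟩

lemma add_mem_coneD {A B : Mat4} (hA : A ∈ coneD) (hB : B ∈ coneD) : A + B ∈ coneD := by
  obtain ⟨n, ξ, ζ, hξ, hζ, rfl⟩ := hA
  obtain ⟨m, ξ', ζ', hξ', hζ', rfl⟩ := hB
  refine ⟨n + m, Fin.append ξ ξ', Fin.append ζ ζ', fun k => ?_, fun k => ?_, ?_⟩
  · refine Fin.addCases (fun i => ?_) (fun i => ?_) k <;> simp [hξ, hξ']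
  · refine Fin.addCases (fun i => ?_) (fun i => ?_) k <;> simp [hζ, hζ']
  · simp [Fin.sum_univ_add]

lemma sum_mem_coneD {α : Type*} (s : Finset α) {A : α → Mat4} (hA : ∀ i, A i ∈ coneD) :
    ∑ i ∈ s, A i ∈ coneD :=
  Finset.sum_induction A (· ∈ coneD) (fun _ _ => add_mem_coneD) zero_mem_coneD fun i _ => hA i

lemma symm_vecMulVec_mem_coneD {ξ ζ : Vec4} (hξ : FutureCausal ξ) (hζ : FutureCausal ζ) :
    (1 / 2 : ℝ) • (vecMulVec ξ ζ + vecMulVec ζ ξ) ∈ coneD :=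
  ⟨1, fun _ => ξ, fun _ => ζ, fun _ => hξ, fun _ => hζ, by simp⟩

lemma single_zero_add_symm_single_mem_coneD (i j : Fin 4) {a c : ℝ} (ha : |a| ≤ c) :
    Matrix.single 0 0 c + (1 / 2 : ℝ) • (Matrix.single i j a + Matrix.single j i a) ∈ coneD := by
  have hhalf := futureCausal_single_add_single i (c := 1 / 2) (s := 1 / 2) (by norm_num)
  have hhalf' := futureCausal_single_add_single i (c := 1 / 2) (s := -(1 / 2)) (by norm_num)
  have hmem := add_mem_coneD
    (symm_vecMulVec_mem_coneD hhalf (futureCausal_single_add_single j ha))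
    (symm_vecMulVec_mem_coneD hhalf'
      (futureCausal_single_add_single j (s := -a) ((abs_neg a).trans_le ha)))
  convert hmem using 1
  ext k l
  simp only [Matrix.add_apply, Matrix.smul_apply, vecMulVec_apply, Matrix.single_apply,
    Pi.add_apply, Pi.single_apply, smul_eq_mul, eq_comm (b := k), eq_comm (b := l), ite_and]
  split_ifs <;> ring

lemma single_zero_add_mem_coneD {B : Mat4} (hB : Bᵀ = B) {c : ℝ} (hBc : ∀ i j, |B i j| ≤ c) :
    Matrix.single 0 0 (16 * c) + B ∈ coneD := by
  have hdecomp : B = (1 / 2 : ℝ) • (B + Bᵀ) := by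
    rw [hB, ← two_smul ℝ, smul_smul]
    norm_num
  have hmem := sum_mem_coneD Finset.univ fun i => sum_mem_coneD Finset.univ fun j =>
    single_zero_add_symm_single_mem_coneD i j (hBc i j)
  convert hmem using 1
  conv_lhs => rw [hdecomp, Matrix.matrix_eq_sum_single B]
  simp only [Matrix.transpose_sum, Matrix.transpose_single, Finset.sum_add_distrib,
    ← Finset.smul_sum, Finset.sum_const, Finset.card_univ, Fintype.card_fin, Matrix.smul_single]
  norm_num [← mul_assoc]

lemma single_zero_mem_coneD {c : ℝ} (hc : 0 ≤ c) : (Matrix.single 0 0 c : Mat4) ∈ coneD := by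
  simpa using single_zero_add_symm_single_mem_coneD 0 0 (a := 0) (by simpa using hc)

lemma generic_single_zero {c : ℝ} (hc : 0 < c) : Generic (Matrix.single 0 0 c) := by
  have hsymm : (Matrix.single 0 0 c : Mat4)ᵀ = Matrix.single 0 0 c := Matrix.transpose_single ..
  refine ⟨hsymm, mem_interior_iff_mem_nhds.2 ?_⟩
  have hclose (i j) : ∀ᶠ A : {A : Mat4 // Aᵀ = A} in 𝓝 ⟨Matrix.single 0 0 c, hsymm⟩,
      |(A.val - Matrix.single 0 0 c : Mat4) i j| < c / 16 := by
    have hcont : Continuous fun A : {A : Mat4 // Aᵀ = A} =>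
        |(A.val - Matrix.single 0 0 c : Mat4) i j| :=
      ((continuous_subtype_val.sub continuous_const).matrix_elem i j).abs
    exact hcont.continuousAt.eventually_lt continuousAt_const (by simpa using hc)
  filter_upwards [eventually_all.2 fun i => eventually_all.2 fun j => hclose i j] with A hA
  have hmem := single_zero_add_mem_coneD (B := A.val - Matrix.single 0 0 c)
    (by rw [Matrix.transpose_sub, A.2, hsymm]) fun i j => (hA i j).le
  rwa [mul_div_cancel₀ c (by norm_num), add_sub_cancel] at hmem

/-! ### Parametrization by coordinate time -/

section MonotoneReparametrization

variable {τ : ℝ → ℝ} {c : ℝ}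

lemma surjective_of_le_deriv (hτ : Differentiable ℝ τ) (hc : 0 < c) (h : ∀ t, c ≤ deriv τ t) :
    Function.Surjective τ := by
  have hgrowth {s t : ℝ} (hst : s ≤ t) : c * (t - s) ≤ τ t - τ s :=
    mul_sub_le_image_sub_of_le_deriv hτ h hst
  refine hτ.continuous.surjective
    (tendsto_atTop_mono' _ ?_
      (tendsto_atTop_add_const_left _ (τ 0) (tendsto_id.const_mul_atTop hc)))
    (tendsto_atBot_mono' _ ?_
      (tendsto_atBot_add_const_left _ (τ 0) (tendsto_id.const_mul_atBot hc)))
  · filter_upwards [eventually_ge_atTop 0] with t ht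
    simpa [le_sub_iff_add_le'] using hgrowth ht
  · filter_upwards [eventually_le_atBot 0] with t ht
    simpa [neg_le_sub_iff_le_add, add_comm] using hgrowth ht

lemma exists_homeomorph_of_le_deriv (hτ : ContDiff ℝ (⊤ : ℕ∞) τ) (hc : 0 < c)
    (h : ∀ t, c ≤ deriv τ t) : ∃ e : ℝ ≃ₜ ℝ, ⇑e = τ ∧ ContDiff ℝ (⊤ : ℕ∞) e.symm := by
  have hpos (t) : 0 < deriv τ t := hc.trans_le (h t)
  have hdiff := hτ.differentiable (by simp)
  let e := ((strictMono_of_deriv_pos hpos).orderIsoOfSurjective τ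
    (surjective_of_le_deriv hdiff hc h)).toHomeomorph
  exact ⟨e, rfl, e.contDiff_symm_deriv (fun t => (hpos t).ne') (fun t => (hdiff t).hasDerivAt) hτ⟩

lemma integral_eq_integral_deriv_mul_comp {τ' : ℝ → ℝ} (hτ : ∀ t, HasDerivAt τ (τ' t) t)
    (hpos : ∀ t, 0 < τ' t) (hsurj : Function.Surjective τ) (g : ℝ → ℝ) :
    ∫ s, g s = ∫ t, τ' t * g (τ t) := by
  have hmono : StrictMono τ := strictMono_of_hasDerivAt_pos hτ hpos
  simpa [hsurj.range_eq, abs_of_pos (hpos _)] using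
    integral_image_eq_integral_abs_deriv_smul MeasurableSet.univ
      (fun t _ => (hτ t).hasDerivWithinAt) hmono.injective.injOn g

end MonotoneReparametrization

/-- `Γ` is the reparametrization by coordinate time of the curve `γ` with unit speed, and `W` is its
Lorentz factor as a function of coordinate time. -/
structure IsTimeReparametrization (γ Γ : ℝ → Vec4) (W : ℝ → ℝ) : Prop where
  isTimeCurve : IsTimeCurve Γ
  isLorentzFactor : IsLorentzFactor Γ W
  surjective_time : Function.Surjective fun t => γ t 0
  comp_time : ∀ t, Γ (γ t 0) = γ t
  hasDerivAt_time : ∀ t, HasDerivAt (fun s => γ s 0) (W (γ t 0)) t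

namespace IsTimeReparametrization

variable {γ Γ : ℝ → Vec4} {W : ℝ → ℝ}

lemma range_eq (h : IsTimeReparametrization γ Γ W) : Set.range Γ = Set.range γ := by
  rw [← h.surjective_time.range_comp Γ]
  exact congrArg Set.range (funext h.comp_time)

lemma deriv_eq (h : IsTimeReparametrization γ Γ W) (t : ℝ) :
    deriv γ t = W (γ t 0) • deriv Γ (γ t 0) := by
  have hchain := HasDerivAt.scomp t (h.isTimeCurve.hasDerivAt (γ t 0)) (h.hasDerivAt_time t)
  rw [show Γ ∘ (fun s => γ s 0) = γ from funext h.comp_time] at hchain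
  exact hchain.deriv

lemma integral_eq (h : IsTimeReparametrization γ Γ W) (g : ℝ → ℝ) :
    ∫ s, g s = ∫ t, W (γ t 0) * g (γ t 0) :=
  integral_eq_integral_deriv_mul_comp h.hasDerivAt_time (fun _ => h.isLorentzFactor.pos _)
    h.surjective_time g

lemma integral_stress (h : IsTimeReparametrization γ Γ W) (x : Vec4 → Mat4) :
    ∫ t, W t * ∑ i, ∑ j, deriv Γ t i * deriv Γ t j * x (Γ t) i j =
      ∫ t, ∑ i, ∑ j, deriv γ t i * deriv γ t j * x (γ t) i j := by
  rw [h.integral_eq]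
  congr! 2 with t
  simp only [h.comp_time, h.deriv_eq t, Pi.smul_apply, smul_eq_mul, Finset.mul_sum]
  exact Finset.sum_congr rfl fun i _ => Finset.sum_congr rfl fun j _ => by ring

lemma integral_current (h : IsTimeReparametrization γ Γ W) (α : Vec4 → Vec4) :
    ∫ t, ∑ a, deriv Γ t a * α (Γ t) a = ∫ t, ∑ a, deriv γ t a * α (γ t) a := by
  rw [h.integral_eq]
  congr! 2 with t
  simp only [h.comp_time, h.deriv_eq t, Pi.smul_apply, smul_eq_mul, Finset.mul_sum, mul_assoc]

end IsTimeReparametrization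

lemma mink_smul_smul (c : ℝ) (x : Vec4) : mink (c • x) (c • x) = c ^ 2 * mink x x := by
  simp only [mink, Pi.smul_apply, smul_eq_mul]
  ring

lemma UnitTimelike.one_le_zero {v : Vec4} (hv : UnitTimelike v) : 1 ≤ v 0 := by
  have hunit := hv.2
  unfold mink at hunit
  nlinarith [hv.1.2, mul_self_nonneg (v 1), mul_self_nonneg (v 2), mul_self_nonneg (v 3)]

lemma exists_isTimeReparametrization {γ : ℝ → Vec4} (hγ : ContDiff ℝ (⊤ : ℕ∞) γ)
    (hunit : ∀ t, UnitTimelike (deriv γ t)) : ∃ Γ W, IsTimeReparametrization γ Γ W := by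
  have htime (t) : HasDerivAt (fun s => γ s 0) (deriv γ t 0) t :=
    hasDerivAt_pi.1 (hγ.differentiable (by simp) t).hasDerivAt 0
  obtain ⟨e, he, he_symm⟩ := exists_homeomorph_of_le_deriv (contDiff_pi.1 hγ 0) one_pos fun t =>
    (htime t).deriv ▸ (hunit t).one_le_zero
  have hsymm (t) : e.symm (γ t 0) = t := by rw [← congrFun he t, e.symm_apply_apply]
  have hΓ : IsTimeCurve (γ ∘ e.symm) :=
    ⟨hγ.comp he_symm, fun s => (congrFun he _).symm.trans (e.apply_symm_apply s)⟩
  have hW : ContDiff ℝ (⊤ : ℕ∞) fun s => deriv γ (e.symm s) 0 :=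
    (contDiff_pi.1 (contDiff_infty_iff_deriv.1 hγ).2 0).comp he_symm
  have hchain (s) : deriv γ (e.symm s) = deriv γ (e.symm s) 0 • deriv (γ ∘ e.symm) s := by
    have hscomp := HasDerivAt.scomp (e.symm s) (hΓ.hasDerivAt (γ (e.symm s) 0)) (htime _)
    rw [show (γ ∘ e.symm) ∘ (fun t => γ t 0) = γ from funext fun t => congrArg γ (hsymm t)]
      at hscomp
    simpa only [show γ (e.symm s) 0 = s from hΓ.time s] using hscomp.deriv
  refine ⟨γ ∘ e.symm, fun s => deriv γ (e.symm s) 0, hΓ,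
    ⟨hW, fun s => (hunit _).1.2, fun s => ?_⟩, he ▸ e.surjective, fun t => congrArg γ (hsymm t),
    fun t => by simpa only [hsymm] using htime t⟩
  rw [← mink_smul_smul, ← hchain]
  exact (hunit _).2

/-! ### Extracting a concentrating sequence from a tracking collection -/

section Exhaustion

variable {V : Type*} [NormedAddCommGroup V] [NormedSpace ℝ V] {S : Set V} {χ : ℕ → V → ℝ}

/-- Test functions vanishing near `S` and eventually equal to one on each compact set disjoint
from `S`. -/
structure IsExhaustionOff (S : Set V) (χ : ℕ → V → ℝ) : Prop where
  isTestFunction : ∀ n, IsTestFunction (χ n)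
  nonneg : ∀ n p, 0 ≤ χ n p
  eventuallyEq_zero : ∀ n, ∀ p ∈ S, χ n =ᶠ[𝓝 p] 0
  eventually_eq_one : ∀ K, IsCompact K → Disjoint S K → ∀ᶠ n in atTop, ∀ p ∈ K, χ n p = 1

lemma IsExhaustionOff.eventually_abs_le (hχ : IsExhaustionOff S χ) {f : V → ℝ}
    (hf : HasCompactSupport f) (hfS : ∀ p ∈ S, f =ᶠ[𝓝 p] 0) {B : ℝ} (hB : ∀ p, ‖f p‖ ≤ B) :
    ∀ᶠ n in atTop, ∀ p, |f p| ≤ B * χ n p := by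
  filter_upwards [hχ.eventually_eq_one (tsupport f) hf
    (Set.disjoint_left.2 fun p hp => notMem_tsupport_iff_eventuallyEq.2 (hfS p hp))] with n hn p
  by_cases hp : p ∈ tsupport f
  · simpa [hn p hp] using hB p
  · rw [image_eq_zero_of_notMem_tsupport hp, abs_zero]
    exact mul_nonneg ((norm_nonneg _).trans (hB p)) (hχ.nonneg n p)

lemma IsExhaustionOff.isNegligibleOff [MeasurableSpace V] [OpensMeasurableSpace V]
    {μ : Measure V} [IsFiniteMeasureOnCompacts μ] (hχ : IsExhaustionOff S χ) {ρ : ℕ → V → ℝ}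
    (hρ : ∀ n, Continuous (ρ n)) (hρ0 : ∀ n p, 0 ≤ ρ n p) {M : ℝ}
    (hM : ∀ n : ℕ, n * ∫ p, ρ n p * χ n p ∂μ ≤ M) : IsNegligibleOff μ atTop S ρ := by
  refine ⟨hρ, hρ0, fun f hf hfc hfS => ?_⟩
  obtain ⟨B, hB⟩ := hfc.exists_bound_of_continuous hf
  have hB0 : 0 ≤ B := (norm_nonneg _).trans (hB 0)
  refine squeeze_zero_norm' ?_ (tendsto_const_div_atTop_nhds_zero_nat (B * M))
  filter_upwards [hχ.eventually_abs_le hfc hfS hB, eventually_gt_atTop 0] with n hn hn0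
  have hinteg : Integrable (fun p => B * (ρ n p * χ n p)) μ :=
    (integrable_mul_of_hasCompactSupport (hρ n) (hχ.isTestFunction n).continuous
      (hχ.isTestFunction n).hasCompactSupport).const_mul B
  have hle : ‖∫ p, ρ n p * f p ∂μ‖ ≤ B * ∫ p, ρ n p * χ n p ∂μ := by
    rw [← integral_const_mul]
    refine norm_integral_le_of_norm_le hinteg (Eventually.of_forall fun p => ?_)
    rw [Real.norm_eq_abs, abs_mul, abs_of_nonneg (hρ0 n p), mul_left_comm]
    exact mul_le_mul_of_nonneg_left (hn p) (hρ0 n p)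
  rw [le_div_iff₀ (Nat.cast_pos.2 hn0)]
  calc ‖∫ p, ρ n p * f p ∂μ‖ * n ≤ (B * ∫ p, ρ n p * χ n p ∂μ) * n := by gcongr
    _ = B * (n * ∫ p, ρ n p * χ n p ∂μ) := by ring
    _ ≤ B * M := mul_le_mul_of_nonneg_left (hM n) hB0

end Exhaustion

lemma sqOffset_pos {Γ : ℝ → Vec4} {p : Vec4} (hp : p ∉ Set.range Γ) : 0 < sqOffset Γ p := by
  refine (Finset.sum_nonneg fun i _ => sq_nonneg _).lt_of_ne' fun h0 => hp ⟨p 0, funext fun i => ?_⟩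
  have hi := (Finset.sum_eq_zero_iff_of_nonneg fun i _ => sq_nonneg (offset Γ i p)).1 h0 i
    (Finset.mem_univ i)
  exact (sub_eq_zero.1 (sq_eq_zero_iff.1 hi)).symm

lemma IsTimeCurve.exists_isExhaustionOff {Γ : ℝ → Vec4} (hΓ : IsTimeCurve Γ) :
    ∃ χ : ℕ → Vec4 → ℝ, IsExhaustionOff (Set.range Γ) χ := by
  let β : ℕ → ContDiffBump (0 : Vec4) := fun n => ⟨n + 1, n + 2, by positivity, by linarith⟩
  refine ⟨fun n p => Real.smoothTransition (n * sqOffset Γ p - 1) * β n p, fun n => ?_,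
    fun n p => mul_nonneg (Real.smoothTransition.nonneg _) (β n).nonneg, ?_, fun K hK hKΓ => ?_⟩
  · exact .mul_left (Real.smoothTransition.contDiff.comp
      ((contDiff_const.mul hΓ.contDiff_sqOffset).sub contDiff_const))
      ⟨(β n).contDiff, (β n).hasCompactSupport⟩
  · rintro n _ ⟨t, rfl⟩
    have hcont : Continuous fun p => n * sqOffset Γ p :=
      continuous_const.mul hΓ.contDiff_sqOffset.continuous
    filter_upwards [hcont.continuousAt.eventually_lt continuousAt_const
      (show n * sqOffset Γ (Γ t) < 1 by simp [hΓ.sqOffset_self])] with p hp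
    simp [Real.smoothTransition.zero_of_nonpos (sub_nonpos.2 hp.le)]
  · obtain ⟨δ, hδ, hδK⟩ := hK.exists_forall_le' hΓ.contDiff_sqOffset.continuous.continuousOn
      fun p hp => sqOffset_pos (Set.disjoint_right.1 hKΓ hp)
    obtain ⟨R, hR⟩ := hK.isBounded.exists_norm_le
    filter_upwards [tendsto_natCast_atTop_atTop.eventually_ge_atTop (2 / δ),
      tendsto_natCast_atTop_atTop.eventually_ge_atTop R] with n hnδ hnR p hp
    have hsq : 2 ≤ n * sqOffset Γ p :=
      ((div_le_iff₀ hδ).1 hnδ).trans (mul_le_mul_of_nonneg_left (hδK p hp) n.cast_nonneg)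
    have hnorm : ‖p‖ ≤ (n : ℝ) + 1 := by linarith [hR p hp]
    rw [Real.smoothTransition.one_of_one_le (by linarith),
      (β n).one_of_mem_closedBall (mem_closedBall_zero_iff.2 hnorm), one_mul]

lemma minner_single_zero (T : Mat4) (c : ℝ) : minner T (Matrix.single 0 0 c) = T 0 0 * c := by
  simp [minner, Matrix.single_apply, ite_and]

lemma integral_smul_apply_mul (c : ℝ) (T : Vec4 → Mat4) (i j : Fin 4) (f : Vec4 → ℝ) :
    ∫ p, (c • T p) i j * f p = c * ∫ p, T p i j * f p := by
  simp only [Matrix.smul_apply, smul_eq_mul, mul_assoc, integral_const_mul]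

lemma integral_minner_smul (c : ℝ) (T x : Vec4 → Mat4) :
    ∫ p, minner (c • T p) (x p) = c * ∫ p, minner (T p) (x p) := by
  simp only [minner, Matrix.smul_apply, smul_eq_mul, mul_assoc, ← Finset.mul_sum,
    integral_const_mul]

lemma integral_sum_smul_mul (c : ℝ) (J α : Vec4 → Vec4) :
    ∫ p, ∑ a, (c • J p) a * α p a = c * ∫ p, ∑ a, J p a * α p a := by
  simp only [Pi.smul_apply, smul_eq_mul, mul_assoc, ← Finset.mul_sum, integral_const_mul]

namespace Tracks

variable {𝒯 : Set (Vec4 → Mat4)} {γ : ℝ → Vec4} {f : Vec4 → ℝ}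

lemma exists_integral_pos (h : Tracks 𝒯 γ) (hf : IsTestFunction f)
    (hf0 : ∃ O, IsOpen O ∧ Set.range γ ⊆ O ∧ ∀ p ∈ O, 0 ≤ f p) (hfγ : ∃ t, 0 < f (γ t)) :
    ∃ T ∈ 𝒯, 0 < ∫ p, T p 0 0 * f p := by
  obtain ⟨O, hO, hγO, hfO⟩ := hf0
  have hsmooth : SmoothMatField fun p => Matrix.single 0 0 (f p) := fun i j => by
    simp only [Matrix.single_apply]
    split_ifs
    exacts [hf.contDiff, contDiff_const]
  have hsupp : HasCompactSupport fun p => (Matrix.single 0 0 (f p) : Mat4) :=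
    hf.hasCompactSupport.comp_left (g := fun c => (Matrix.single 0 0 c : Mat4))
      (Matrix.single_zero 0 0)
  simpa only [minner_single_zero] using h (fun p => Matrix.single 0 0 (f p)) hsmooth hsupp
    (fun p => Matrix.transpose_single ..) ⟨O, hO, hγO, fun p hp => single_zero_mem_coneD (hfO p hp)⟩
    (hfγ.imp fun t => generic_single_zero)

lemma exists_mul_integral_lt (h : Tracks 𝒯 γ) (hcont : ∀ T ∈ 𝒯, Continuous fun p => T p 0 0)
    (hf : IsTestFunction f) (hf0 : ∀ p, 0 ≤ f p) (hfγ : ∃ t, 0 < f (γ t)) {χ : Vec4 → ℝ}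
    (hχ : IsTestFunction χ) (hχγ : ∀ p ∈ Set.range γ, χ =ᶠ[𝓝 p] 0) (c : ℝ) :
    ∃ T ∈ 𝒯, c * ∫ p, T p 0 0 * χ p < ∫ p, T p 0 0 * f p := by
  have hχ0 {p : Vec4} (hp : χ =ᶠ[𝓝 p] 0) : f p - c * χ p = f p := by simp [hp.eq_of_nhds]
  obtain ⟨T, hT, hpos⟩ := h.exists_integral_pos (hf.sub (hχ.const_mul c))
    ⟨{p | χ =ᶠ[𝓝 p] 0}, isOpen_setOfPred_eventually_nhds, hχγ,
      fun p hp => (hf0 p).trans_eq (hχ0 hp).symm⟩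
    (hfγ.imp fun t ht => ht.trans_eq (hχ0 (hχγ _ ⟨t, rfl⟩)).symm)
  refine ⟨T, hT, ?_⟩
  rw [integral_mul_sub (hcont T hT) hf.continuous hf.hasCompactSupport
    (hχ.const_mul c).continuous (hχ.const_mul c).hasCompactSupport] at hpos
  simpa only [mul_left_comm _ c, integral_const_mul, sub_pos] using hpos

lemma exists_isNegligibleOff (h : Tracks 𝒯 γ) (hcont : ∀ T ∈ 𝒯, Continuous fun p => T p 0 0)
    (hnonneg : ∀ T ∈ 𝒯, ∀ p, 0 ≤ T p 0 0) {χ : ℕ → Vec4 → ℝ}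
    (hχ : IsExhaustionOff (Set.range γ) χ) (hf : IsTestFunction f) (hf0 : ∀ p, 0 ≤ f p)
    (hfγ : ∃ t, 0 < f (γ t)) :
    ∃ (c : ℕ → ℝ) (T : ℕ → Vec4 → Mat4), (∀ n, 0 < c n) ∧ (∀ n, T n ∈ 𝒯) ∧
      (∀ n, ∫ p, (c n • T n p) 0 0 * f p = 1) ∧
      IsNegligibleOff volume atTop (Set.range γ) fun n p => (c n • T n p) 0 0 := by
  choose T hT hlt using fun n : ℕ => h.exists_mul_integral_lt hcont hf hf0 hfγ
    (hχ.isTestFunction n) (hχ.eventuallyEq_zero n) n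
  have hmass (n) : 0 < ∫ p, T n p 0 0 * f p :=
    (mul_nonneg n.cast_nonneg (integral_nonneg fun p =>
      mul_nonneg (hnonneg _ (hT n) p) (hχ.nonneg n p))).trans_lt (hlt n)
  refine ⟨fun n => (∫ p, T n p 0 0 * f p)⁻¹, T, fun n => inv_pos.2 (hmass n), hT, fun n => ?_,
    hχ.isNegligibleOff (M := 1) (fun n => continuous_const.mul (hcont _ (hT n)))
      (fun n p => mul_nonneg (inv_pos.2 (hmass n)).le (hnonneg _ (hT n) p)) fun n => ?_⟩
  · rw [integral_smul_apply_mul, inv_mul_cancel₀ (hmass n).ne']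
  · rw [integral_smul_apply_mul, mul_left_comm, inv_mul_le_one₀ (hmass n)]
    exact (hlt n).le

end Tracks

lemma tubeLift_div (Γ : ℝ → Vec4) (φ W : ℝ → ℝ) (p : Vec4) :
    tubeLift Γ (fun t => φ t / W t) p = tubeLift Γ φ p / W (p 0) := by
  simp only [tubeLift]
  ring

theorem exists_concentratesOn_of_tracks {F : Vec4 → Mat4} {κ : ℝ} {γ Γ : ℝ → Vec4} {W : ℝ → ℝ}
    {C : Set ((Vec4 → Mat4) × (Vec4 → Vec4))} (hγ : IsTimeReparametrization γ Γ W)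
    (hF : ∀ a b, Continuous fun p => (E * F p) a b) (hκ : 0 ≤ κ)
    (hC : ∀ TJ ∈ C, ChargedMatter F κ TJ.1 TJ.2) (htr : Tracks (Prod.fst '' C) γ) :
    ∃ (c : ℕ → ℝ) (TJ : ℕ → (Vec4 → Mat4) × (Vec4 → Vec4)), (∀ n, 0 < c n) ∧ (∀ n, TJ n ∈ C) ∧
      ConcentratesOn volume atTop (Set.range Γ) (fun n p => (c n • (TJ n).1 p) 0 0) ∧
      ∀ n, ∫ p, (c n • (TJ n).1 p) 0 0 / W (p 0) * tubeLift Γ timeBump p = 1 := by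
  have hΓ := hγ.isTimeCurve
  have hW := hγ.isLorentzFactor
  have hβ := hW.isTestFunction_div isTestFunction_timeBump
  obtain ⟨χ, hχ⟩ := hΓ.exists_isExhaustionOff
  have hpos : ∃ t, 0 < tubeLift Γ (fun t => timeBump t / W t) (γ t) := by
    obtain ⟨t, ht⟩ : Γ 0 ∈ Set.range γ := hγ.range_eq ▸ ⟨0, rfl⟩
    refine ⟨t, ?_⟩
    rw [ht, hΓ.tubeLift_self]
    exact hW.timeBump_div_pos (by norm_num)
  obtain ⟨c, T, hc, hT, hmass, hneg⟩ := htr.exists_isNegligibleOff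
    (by rintro _ ⟨TJ, hTJ, rfl⟩; exact (hC TJ hTJ).continuous 0 0)
    (by rintro _ ⟨TJ, hTJ, rfl⟩; exact (hC TJ hTJ).energy_nonneg)
    (hγ.range_eq ▸ hχ) (hΓ.isTestFunction_tubeLift hβ) (tubeLift_nonneg hW.timeBump_div_nonneg) hpos
  choose TJ hTJ hTJT using hT
  obtain rfl : T = fun n => (TJ n).1 := funext fun n => (hTJT n).symm
  have hmatter (n) := (hC _ (hTJ n)).smul (hc n).le
  refine ⟨c, TJ, hc, hTJ, ?_, fun n => ?_⟩
  · exact (ChargedMatter.isDominatedFlow_stress hmatter hκ hF 0).concentratesOn hΓ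
      (hγ.range_eq.symm ▸ hneg) hβ.continuous hβ.hasCompactSupport hW.timeBump_div_nonneg
      (fun t => hW.timeBump_div_pos) (Eventually.of_forall fun n => (hmass n).le)
  · simpa only [tubeLift_div, mul_div_assoc', div_mul_eq_mul_div] using hmass n

/-- Charged tracking collections converge to a charged delta distribution. -/
theorem charged_tracking_delta_convergence (F : Vec4 → Mat4)
    (hFs : ∀ a b : Fin 4, ContDiff ℝ (⊤ : ℕ∞) fun p => F p a b)
    (hFa : ∀ p, (F p)ᵀ = -(F p))
    (γ : ℝ → Vec4) (hγ : ContDiff ℝ (⊤ : ℕ∞) γ)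
    (hunit : ∀ t : ℝ, mink (deriv γ t) (deriv γ t) = 1)
    (htl : ∀ t : ℝ, FutureTimelike (deriv γ t))
    (κ : ℝ) (hκ : 0 ≤ κ)
    (C : Set ((Vec4 → Mat4) × (Vec4 → Vec4)))
    (hC : ∀ TJ ∈ C, SmoothMatField TJ.1 ∧ SymValued TJ.1 ∧ (∀ p, DEC (TJ.1 p)) ∧
      (∀ a : Fin 4, ContDiff ℝ (⊤ : ℕ∞) fun p => TJ.2 p a) ∧
      (∀ p, ∑ a, pd a (fun q => TJ.2 q a) p = 0) ∧
      (∀ p (a : Fin 4), ∑ b, pd b (fun q => TJ.1 q a b) p = ∑ b, (E * F p) a b * TJ.2 p b) ∧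
      (∀ p (t : Vec4), UnitTimelike t →
        |∑ a, TJ.2 p a * t a| ≤ κ * ∑ a, ∑ b, TJ.1 p a b * t a * t b))
    (htr : Tracks (Prod.fst '' C) γ) :
    ∃ κ' : ℝ, |κ'| ≤ κ ∧
      ∃ (c : ℕ → ℝ) (TJn : ℕ → (Vec4 → Mat4) × (Vec4 → Vec4)),
        (∀ n, 0 < c n) ∧ (∀ n, TJn n ∈ C) ∧
        (∀ x : Vec4 → Mat4, SmoothMatField x → HasCompactSupport x → SymValued x →
          Tendsto (fun n => c n * ∫ p, minner ((TJn n).1 p) (x p)) atTop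
            (𝓝 (∫ t : ℝ, ∑ i, ∑ j, deriv γ t i * deriv γ t j * x (γ t) i j))) ∧
        (∀ α : Vec4 → Vec4, (∀ a : Fin 4, ContDiff ℝ (⊤ : ℕ∞) fun p => α p a) →
          HasCompactSupport α →
          Tendsto (fun n => c n * ∫ p, ∑ a, (TJn n).2 p a * α p a) atTop
            (𝓝 (κ' * ∫ t : ℝ, ∑ a, deriv γ t a * α (γ t) a))) := by
  obtain ⟨Γ, W, h⟩ := exists_isTimeReparametrization hγ fun t => ⟨htl t, hunit t⟩
  have hmatter : ∀ TJ ∈ C, ChargedMatter F κ TJ.1 TJ.2 := fun TJ hTJ =>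
    have ⟨hT, hsymm, hdec, hJ, hJdiv, hTdiv, hratio⟩ := hC TJ hTJ
    ⟨hT, hsymm, hdec, hJ, hJdiv, hTdiv, hratio⟩
  have hF (a b) : ContDiff ℝ (⊤ : ℕ∞) fun p => (E * F p) a b := by
    simpa only [E_mul_apply] using contDiff_const.mul (hFs a b)
  obtain ⟨c, TJ, hc, hTJ, hconc, hmass⟩ :=
    exists_concentratesOn_of_tracks h (fun a b => (hF a b).continuous) hκ hmatter htr
  obtain ⟨κ', hκ', σ, -, hstress, hcurrent⟩ := ChargedMatter.exists_subseq_tendsto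
    (fun n => (hmatter _ (hTJ n)).smul (hc n).le) hκ h.isTimeCurve h.isLorentzFactor hconc hF hFa
    hmass
  refine ⟨κ', hκ', fun n => c (σ n), fun n => TJ (σ n), fun n => hc _, fun n => hTJ _,
    fun x hx hxc _ => ?_, fun α hα hαc => ?_⟩
  · simpa only [integral_minner_smul, h.integral_stress] using hstress x fun i j =>
      ⟨hx i j, hxc.comp_left (g := fun A : Mat4 => A i j) rfl⟩
  · simpa only [integral_sum_smul_mul, h.integral_current] using hcurrent α fun a =>
      ⟨hα a, hαc.comp_left (g := fun v : Vec4 => v a) rfl⟩
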